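/- arXiv:math/9509211 — 15 statements merged into one kernel-verified Lean document; each statement's English description precedes it below -/
import Mathlib

section
/- For every topological space X, X satisfies S1(Γ,Γ) if and only if X satisfies Sfin(Γ,Γ). -/
open Set

universe u

variable {X : Type u} [TopologicalSpace X]

/-- A γ-cover: a countably infinite family of open sets such that every point
belongs to all but finitely many members. -/
def IsGammaCover (U : Set (Set X)) : Prop :=
  U.Countable ∧ U.Infinite ∧ (∀ u ∈ U, IsOpen u) ∧ ∀ x : X, {u ∈ U | x ∉ u}.Finite

/-- A large cover: a countable family of open sets such that every point
belongs to infinitely many members. -/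
def IsLargeCover (U : Set (Set X)) : Prop :=
  U.Countable ∧ (∀ u ∈ U, IsOpen u) ∧ ∀ x : X, {u ∈ U | x ∈ u}.Infinite

/-- An ω-cover: a countable family of open sets, not containing `univ`, such
that every finite subset of the space is contained in some member. -/
def IsOmegaCover (U : Set (Set X)) : Prop :=
  U.Countable ∧ (∀ u ∈ U, IsOpen u) ∧ univ ∉ U ∧
    ∀ F : Set X, F.Finite → ∃ u ∈ U, F ⊆ u

/-- A (countable) open cover. -/
def IsCountableOpenCover (U : Set (Set X)) : Prop :=
  U.Countable ∧ (∀ u ∈ U, IsOpen u) ∧ ⋃₀ U = univ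

/-- The selection principle S1(A,B). -/
def S1 (A B : Set (Set X) → Prop) : Prop :=
  ∀ U : ℕ → Set (Set X), (∀ n, A (U n)) →
    ∃ V : ℕ → Set X, (∀ n, V n ∈ U n) ∧ B (range V)

/-- The selection principle Sfin(A,B). -/
def Sfin (A B : Set (Set X) → Prop) : Prop :=
  ∀ U : ℕ → Set (Set X), (∀ n, A (U n)) →
    ∃ V : ℕ → Set (Set X), (∀ n, (V n).Finite ∧ V n ⊆ U n) ∧ B (⋃ n, V n)

/-- The selection principle Ufin(Γ,B). -/
def Ufin (B : Set (Set X) → Prop) : Prop :=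
  ∀ U : ℕ → Set (Set X), (∀ n, IsGammaCover (U n)) →
    ∃ V : ℕ → Set (Set X), (∀ n, (V n).Finite ∧ V n ⊆ U n) ∧
      ((∃ n, ⋃₀ (V n) = univ) ∨ B (range fun n => ⋃₀ (V n)))

theorem gammaCover_range_aux {X : Type u} [TopologicalSpace X] (f : ℕ → Set X)
    (ho : ∀ k, IsOpen (f k)) (hne : ∀ k, f k ≠ univ)
    (hx : ∀ x : X, {k | x ∉ f k}.Finite) : IsGammaCover (range f) := by
  refine ⟨countable_range f, ?_, ?_, ?_⟩
  · intro hfin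
    obtain ⟨w, hw⟩ : ∃ w : Set X, (f ⁻¹' {w}).Infinite := by
      by_contra! hcon
      have h1 : (f ⁻¹' (range f)).Finite := by
        refine Set.Finite.preimage' hfin ?_
        intro b _
        exact Set.not_infinite.mp (by simpa using hcon b)
      rw [preimage_range] at h1
      exact infinite_univ h1
    obtain ⟨k, hk⟩ := hw.nonempty
    have hk' : f k = w := hk
    apply hne k
    rw [hk']
    by_contra hwu
    obtain ⟨x, hxw⟩ := (ne_univ_iff_exists_notMem w).mp hwu
    apply hw
    refine (hx x).subset ?_
    intro j hj
    have hj' : f j = w := hj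
    change x ∉ f j
    rwa [hj']
  · rintro _ ⟨k, rfl⟩
    exact ho k
  · intro x
    refine ((hx x).image f).subset ?_
    rintro _ ⟨⟨k, rfl⟩, h⟩
    exact ⟨k, h, rfl⟩

theorem stmt0 {X : Type u} [TopologicalSpace X] :
    S1 (X := X) IsGammaCover IsGammaCover ↔
      Sfin (X := X) IsGammaCover IsGammaCover := by
  constructor
  · intro h U hU
    obtain ⟨V, hV, hB⟩ := h U hU
    refine ⟨fun n => {V n}, fun n => ⟨finite_singleton _, by simpa using hV n⟩, ?_⟩
    have : (⋃ n, ({V n} : Set (Set X))) = range V := by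
      ext w
      simp [eq_comm]
    rwa [this]
  · intro h U hU
    have he : ∀ n, ∃ e : ℕ → Set X, Function.Injective e ∧ ∀ k, e k ∈ U n ∧ e k ≠ univ := by
      intro n
      have hinf : (U n \ {univ}).Infinite := (hU n).2.1.diff (finite_singleton _)
      refine ⟨fun k => (hinf.natEmbedding _ k : Set X), ?_, ?_⟩
      · intro a b hab
        exact (hinf.natEmbedding _).injective (Subtype.ext hab)
      · intro k
        exact (hinf.natEmbedding _ k).2
    choose e hinj hmem using he
    have hfin : ∀ n (x : X), {k | x ∉ e n k}.Finite := by
      intro n x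
      refine (((hU n).2.2.2 x).preimage (hinj n).injOn).subset ?_
      intro k hk
      exact ⟨(hmem n k).1, hk⟩
    let W : ℕ → ℕ → Set X := fun n k => ⋂ i ∈ Finset.range (n + 1), e i k
    have hWsub : ∀ n m k, n ≤ m → W m k ⊆ e n k := by
      intro n m k hnm
      exact biInter_subset_of_mem (Finset.mem_coe.mpr (Finset.mem_range.mpr (by omega)))
    have hW : ∀ n, IsGammaCover (range (W n)) := by
      intro n
      apply gammaCover_range_aux
      · intro k
        exact isOpen_biInter_finset fun i _ => (hU i).2.2.1 _ (hmem i k).1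
      · intro k hk
        apply (hmem n k).2
        exact univ_subset_iff.mp (hk ▸ hWsub n n k le_rfl)
      · intro x
        refine ((Finset.range (n + 1)).finite_toSet.biUnion fun i _ => hfin i x).subset ?_
        intro k hk
        simpa [W] using hk
    obtain ⟨F, hF, -, hTinf, -, hTx⟩ := h (fun n => range (W n)) hW
    have hg : ∀ n, ∃ w, w ∈ (⋃ m, F m) \ ⋃ m ∈ Finset.range n, F m := by
      intro n
      exact (hTinf.diff ((Finset.range n).finite_toSet.biUnion fun i _ => (hF i).1)).nonempty
    choose g hgT hgn using hg
    have hgn' : ∀ n m, g n ∈ F m → n ≤ m := by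
      intro n m hm
      by_contra hlt
      apply hgn n
      simp only [mem_iUnion]
      exact ⟨m, Finset.mem_range.mpr (by omega), hm⟩
    have hk : ∀ n, ∃ k, g n ⊆ e n k := by
      intro n
      obtain ⟨m, hm⟩ := mem_iUnion.mp (hgT n)
      obtain ⟨k, hk⟩ := (hF m).2 hm
      exact ⟨k, hk ▸ hWsub n m k (hgn' n m hm)⟩
    choose k hk using hk
    refine ⟨fun n => e n (k n), fun n => (hmem n _).1, ?_⟩
    apply gammaCover_range_aux
    · intro n
      exact (hU n).2.2.1 _ (hmem n _).1
    · intro n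
      exact (hmem n _).2
    · intro x
      have h1 : (g ⁻¹' {u ∈ ⋃ n, F n | x ∉ u}).Finite := by
        refine Set.Finite.preimage' (hTx x) ?_
        intro w hw
        obtain ⟨m, hm⟩ := mem_iUnion.mp hw.1
        refine (finite_Iic m).subset ?_
        intro n hn
        have hn' : g n = w := hn
        exact hgn' n m (hn' ▸ hm)
      refine h1.subset ?_
      intro n hn
      exact ⟨hgT n, fun hxg => hn (hk n hxg)⟩
end

section
/- For every topological space X, X satisfies Sfin(Γ,Λ) if and only if X satisfies Sfin(Λ,Λ). -/
open Set

universe u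

variable {X : Type u} [TopologicalSpace X]

theorem menger_aux {X : Type u} [TopologicalSpace X]
    (h : Sfin (X := X) IsGammaCover IsLargeCover)
    (W : ℕ → ℕ → Set X) (ho : ∀ n k, IsOpen (W n k)) (hm : ∀ n, Monotone (W n))
    (hc : ∀ n x, ∃ k, x ∈ W n k) :
    ∃ f : ℕ → ℕ, ∀ x, ∀ N, ∃ n, N ≤ n ∧ x ∈ W n (f n) := by
  classical
  by_cases hA : ∀ N, ∃ n, N ≤ n ∧ ∃ k, W n k = univ
  · refine ⟨fun n => if hk : ∃ k, W n k = univ then hk.choose else 0, fun x N => ?_⟩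
    obtain ⟨n, hn, hk⟩ := hA N
    refine ⟨n, hn, ?_⟩
    simp only [dif_pos hk]
    rw [hk.choose_spec]
    trivial
  · push Not at hA
    obtain ⟨N, hN⟩ := hA
    have hG : ∀ m, IsGammaCover (range (W (N + m))) := by
      intro m
      refine ⟨countable_range _, ?_, ?_, ?_⟩
      · intro hfin
        have : Finite (range (W (N + m))) := hfin
        obtain ⟨y, hy⟩ := Finite.exists_infinite_fiber (rangeFactorization (W (N + m)))
        have hy' := Set.infinite_coe_iff.1 hy
        have : ∃ k, W (N + m) k = univ := by
          obtain ⟨_, k1, rfl⟩ := y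
          refine ⟨k1, eq_univ_of_forall fun x => ?_⟩
          obtain ⟨k0, hk0⟩ := hc (N + m) x
          obtain ⟨k, hk, hlt⟩ := hy'.exists_gt k0
          have e : W (N + m) k = W (N + m) k1 := congrArg Subtype.val hk
          rw [← e]
          exact hm _ hlt.le hk0
        obtain ⟨k, hk⟩ := this
        exact hN _ (Nat.le_add_right _ _) k hk
      · rintro _ ⟨k, rfl⟩
        exact ho _ _
      · intro x
        obtain ⟨k0, hk0⟩ := hc (N + m) x
        refine ((finite_Iio k0).image (W (N + m))).subset ?_
        rintro _ ⟨⟨k, rfl⟩, hx⟩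
        refine ⟨k, ?_, rfl⟩
        by_contra hlt
        exact hx (hm _ (not_lt.1 hlt) hk0)
    obtain ⟨V, hV, -, -, hl⟩ := h _ hG
    have hb : ∀ m, ∃ k, ∀ v ∈ V m, v ⊆ W (N + m) k := by
      intro m
      have hex : ∀ v : Set X, ∃ j, v ∈ V m → v = W (N + m) j := by
        intro v
        by_cases hv : v ∈ V m
        · obtain ⟨j, hj⟩ := (hV m).2 hv
          exact ⟨j, fun _ => hj.symm⟩
        · exact ⟨0, fun h => absurd h hv⟩
      choose g hg using hex
      obtain ⟨k, hk⟩ := ((hV m).1.image g).bddAbove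
      refine ⟨k, fun v hv => ?_⟩
      rw [hg v hv]
      exact hm _ (hk ⟨v, hv, rfl⟩)
    choose f hf using hb
    refine ⟨fun n => f (n - N), fun x M => ?_⟩
    by_contra hcon
    push Not at hcon
    refine hl x (((finite_Iio M).biUnion fun m _ => (hV m).1).subset ?_)
    rintro v ⟨hv, hxv⟩
    obtain ⟨m, hvm⟩ := mem_iUnion.1 hv
    refine mem_biUnion (x := m) ?_ hvm
    by_contra hlt
    have hlt' : M ≤ m := not_lt.1 hlt
    have := hcon (N + m) (by omega)
    rw [Nat.add_sub_cancel_left] at this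
    exact this (hf m v hvm hxv)

theorem stmt1 {X : Type u} [TopologicalSpace X] :
    Sfin (X := X) IsGammaCover IsLargeCover ↔
      Sfin (X := X) IsLargeCover IsLargeCover := by
  classical
  constructor
  · intro h U hU
    rcases isEmpty_or_nonempty X with hX | ⟨⟨x0⟩⟩
    · refine ⟨fun _ => ∅, fun n => ⟨finite_empty, empty_subset _⟩, ?_⟩
      refine ⟨by simp, by simp, fun x => (hX.false x).elim⟩
    have he : ∀ n, ∃ e : ℕ → Set X, U n = range e := by
      intro n
      obtain ⟨u, hu⟩ := ((hU n).2.2 x0).nonempty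
      exact (hU n).1.exists_eq_range ⟨u, hu.1⟩
    choose e he using he
    let W : ℕ → ℕ → Set X := fun n k =>
      {x | ∃ s : Finset (Set X), (s : Set (Set X)) ⊆ e n '' Iio k ∧ s.card = n ∧ ∀ u ∈ s, x ∈ u}
    have hsub : ∀ n k, e n '' Iio k ⊆ U n := by
      intro n k
      rw [he n]
      exact image_subset_range _ _
    have key : ∃ f : ℕ → ℕ, ∀ x, ∀ N, ∃ n, N ≤ n ∧ x ∈ W n (f n) := by
      refine menger_aux h W ?_ ?_ ?_
      · intro n k
        rw [isOpen_iff_forall_mem_open]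
        rintro x ⟨s, hs, hcard, hxs⟩
        refine ⟨⋂ u ∈ s, u, ?_, ?_, ?_⟩
        · intro y hy
          exact ⟨s, hs, hcard, fun u hu => mem_iInter₂.1 hy u hu⟩
        · exact isOpen_biInter_finset fun u hu => (hU n).2.1 u (hsub _ _ (hs hu))
        · exact mem_iInter₂.2 hxs
      · rintro n k l hkl x ⟨s, hs, hcard, hxs⟩
        exact ⟨s, hs.trans (image_mono (Iio_subset_Iio hkl)), hcard, hxs⟩
      · intro n x
        obtain ⟨s, hs, hcard⟩ := ((hU n).2.2 x).exists_subset_card_eq n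
        have hex : ∀ v : Set X, ∃ j, v ∈ s → e n j = v := by
          intro v
          by_cases hv : v ∈ s
          · have := (hs hv).1
            rw [he n] at this
            obtain ⟨j, hj⟩ := this
            exact ⟨j, fun _ => hj⟩
          · exact ⟨0, fun h => absurd h hv⟩
        choose g hg using hex
        refine ⟨s.sup g + 1, s, ?_, hcard, fun u hu => (hs hu).2⟩
        intro v hv
        exact ⟨g v, Nat.lt_succ_of_le (Finset.le_sup (f := g) hv), hg v hv⟩
    obtain ⟨f, hf⟩ := key
    · refine ⟨fun n => e n '' Iio (f n), fun n => ⟨(finite_Iio _).image _, hsub _ _⟩, ?_⟩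
      refine ⟨countable_iUnion fun n => ((finite_Iio _).image _).countable, ?_, ?_⟩
      · intro u hu
        obtain ⟨n, hn⟩ := mem_iUnion.1 hu
        exact (hU n).2.1 u (hsub _ _ hn)
      · intro x hfin
        obtain ⟨n, hn, s, hs, hcard, hxs⟩ := hf x (hfin.toFinset.card + 1)
        have : s ⊆ hfin.toFinset := by
          intro u hu
          rw [Finite.mem_toFinset]
          exact ⟨mem_iUnion.2 ⟨n, hs hu⟩, hxs u hu⟩
        have := Finset.card_le_card this
        omega
  · intro h U hU
    refine h U fun n => ⟨(hU n).1, (hU n).2.2.1, fun x hfin => (hU n).2.1 ?_⟩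
    refine (hfin.union ((hU n).2.2.2 x)).subset fun u hu => ?_
    by_cases hx : x ∈ u
    · exact Or.inl ⟨hu, hx⟩
    · exact Or.inr ⟨hu, hx⟩
end

section
/- Let X be a compact topological space and let k be a positive integer. Every ω-cover of X contains a finite subfamily V such that every k-element subset of X is contained in some member of V (i.e., V is a k-cover of X). -/
open Set

universe u

variable {X : Type u} [TopologicalSpace X]

theorem stmt2 {X : Type u} [TopologicalSpace X] [CompactSpace X]
    (k : ℕ) (hk : 0 < k) (U : Set (Set X)) (hU : IsOmegaCover U) :
    ∃ V ⊆ U, V.Finite ∧ ∀ F : Set X, F.Finite → F.ncard ≤ k → ∃ u ∈ V, F ⊆ u := by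
  obtain ⟨-, hopen, -, hfin⟩ := hU
  obtain ⟨u0, hu0, -⟩ := hfin ∅ Set.finite_empty
  obtain ⟨t, ht⟩ := (isCompact_univ (X := Fin k → X)).elim_finite_subcover
    (fun u : U => Set.pi Set.univ (fun _ : Fin k => (u : Set X)))
    (fun u => isOpen_set_pi Set.finite_univ (fun _ _ => hopen u u.2))
    (by
      intro f _
      obtain ⟨u, hu, hfu⟩ := hfin (Set.range f) (Set.finite_range f)
      exact Set.mem_iUnion.2 ⟨⟨u, hu⟩, fun i _ => hfu ⟨i, rfl⟩⟩)
  refine ⟨insert u0 (Subtype.val '' (t : Set U)), ?_, ?_, ?_⟩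
  · rintro v (rfl | ⟨w, -, rfl⟩)
    · exact hu0
    · exact w.2
  · exact (t.finite_toSet.image _).insert _
  · intro F hF hc
    rcases F.eq_empty_or_nonempty with rfl | ⟨a, ha⟩
    · exact ⟨u0, Set.mem_insert _ _, Set.empty_subset _⟩
    · have : Fintype F := hF.fintype
      have hcard : Fintype.card F ≤ Fintype.card (Fin k) := by
        rw [Fintype.card_fin, ← Nat.card_eq_fintype_card]
        exact hc
      obtain ⟨e⟩ := Function.Embedding.nonempty_of_card_le hcard
      have : Nonempty F := ⟨⟨a, ha⟩⟩
      have hs := Function.invFun_surjective e.injective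
      have hm := ht (Set.mem_univ (fun i => ((Function.invFun e i : F) : X)))
      simp only [Set.mem_iUnion] at hm
      obtain ⟨u, hut, hu⟩ := hm
      refine ⟨u, Or.inr ⟨u, hut, rfl⟩, fun x hx => ?_⟩
      obtain ⟨i, hi⟩ := hs ⟨x, hx⟩
      have := hu i (Set.mem_univ i)
      simpa [hi] using this
end

section
/- Every σ-compact topological space (a space that is the union of countably many compact subsets) satisfies both Sfin(Ω,Ω) and Ufin(Γ,Γ). -/
open Set

universe u

variable {X : Type u} [TopologicalSpace X]

theorem stmt3 {X : Type u} [TopologicalSpace X]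
    (hX : ∃ K : ℕ → Set X, (∀ n, IsCompact (K n)) ∧ (⋃ n, K n) = univ) :
    Sfin (X := X) IsOmegaCover IsOmegaCover ∧ Ufin (X := X) IsGammaCover := by
  obtain ⟨K, hK, hKu⟩ := hX
  -- an increasing sequence of compact sets exhausting the space
  obtain ⟨L, hL, hLm, hLx⟩ : ∃ L : ℕ → Set X, (∀ n, IsCompact (L n)) ∧ Monotone L ∧
      ∀ x, ∃ n, x ∈ L n := by
    refine ⟨Set.accumulate K, fun n => ?_, Set.monotone_accumulate, fun x => ?_⟩
    · rw [Set.accumulate_def]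
      exact (Set.finite_Iic n).isCompact_biUnion fun i _ => hK i
    · obtain ⟨n, hn⟩ := Set.mem_iUnion.1 (hKu ▸ Set.mem_univ x : x ∈ ⋃ n, K n)
      exact ⟨n, Set.subset_accumulate hn⟩
  constructor
  · intro U hU
    have key : ∀ n, ∃ V ⊆ U n, V.Finite ∧
        (Set.univ.pi fun _ : Fin (Nat.unpair n).1 => L (Nat.unpair n).2) ⊆
          ⋃ v ∈ V, Set.univ.pi fun _ : Fin (Nat.unpair n).1 => v := by
      intro n
      obtain ⟨-, ho, -, hF⟩ := hU n
      apply IsCompact.elim_finite_subcover_image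
      · exact isCompact_univ_pi fun _ => hL _
      · intro v hv
        exact isOpen_set_pi Set.finite_univ fun _ _ => ho v hv
      · intro f _
        obtain ⟨u, hu, hfu⟩ := hF (range f) (Set.finite_range f)
        exact Set.mem_biUnion hu fun i _ => hfu ⟨i, rfl⟩
    choose V hVU hVf hV using key
    refine ⟨V, fun n => ⟨hVf n, hVU n⟩, ?_, ?_, ?_, ?_⟩
    · exact Set.countable_iUnion fun n => (hVf n).countable
    · intro u hu
      obtain ⟨n, hn⟩ := Set.mem_iUnion.1 hu
      exact (hU n).2.1 u (hVU n hn)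
    · intro hu
      obtain ⟨n, hn⟩ := Set.mem_iUnion.1 hu
      exact (hU n).2.2.1 (hVU n hn)
    · intro F hF
      obtain ⟨k, hk⟩ : ∃ k, F ⊆ L k := by
        choose g hg using hLx
        obtain ⟨k, hk⟩ := (hF.image g).bddAbove
        exact ⟨k, fun x hx => hLm (hk ⟨x, hx, rfl⟩) (hg x)⟩
      obtain ⟨m, f, hf⟩ : ∃ (m : ℕ) (f : Fin m → X), range f = F := by
        obtain ⟨m, f, -, hf⟩ := hF.fin_param
        exact ⟨m, f, hf⟩
      have h := hV (Nat.pair m k)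
      rw [Nat.unpair_pair] at h
      have h2 := h (show f ∈ _ from fun i _ => hk (hf ▸ ⟨i, rfl⟩))
      simp only [Set.mem_iUnion, exists_prop] at h2
      obtain ⟨v, hv, hfv⟩ := h2
      refine ⟨v, Set.mem_iUnion.2 ⟨_, hv⟩, ?_⟩
      rw [← hf]
      rintro _ ⟨i, rfl⟩
      exact hfv i trivial
  · intro U hU
    have key : ∀ n, ∃ V ⊆ U n, V.Finite ∧ L n ⊆ ⋃ v ∈ V, v := by
      intro n
      obtain ⟨-, hi, ho, hx⟩ := hU n
      apply IsCompact.elim_finite_subcover_image (hL n) ho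
      intro x _
      obtain ⟨u, hu, hxu⟩ := (hi.sdiff (hx x)).nonempty
      refine Set.mem_biUnion hu ?_
      by_contra h
      exact hxu ⟨hu, h⟩
    choose V hVU hVf hV using key
    refine ⟨V, fun n => ⟨hVf n, hVU n⟩, ?_⟩
    by_cases hun : ∃ n, ⋃₀ (V n) = univ
    · exact Or.inl hun
    refine Or.inr ⟨Set.countable_range _, ?_, ?_, ?_⟩
    · intro hfin
      have hfin' : Finite (range fun n => ⋃₀ (V n)) := hfin
      obtain ⟨⟨w, m, hm⟩, hw⟩ := Finite.exists_infinite_fiber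
        (Set.rangeFactorization fun n => ⋃₀ (V n))
      rw [Set.infinite_coe_iff] at hw
      apply hun
      refine ⟨m, Set.eq_univ_of_forall fun x => ?_⟩
      obtain ⟨k, hk⟩ := hLx x
      obtain ⟨n, hn, hkn⟩ := hw.exists_gt k
      have hn' : ⋃₀ (V n) = w := congrArg Subtype.val hn
      have := hV n (hLm hkn.le hk)
      rw [← Set.sUnion_eq_biUnion, hn'] at this
      exact (show ⋃₀ (V m) = w from hm) ▸ this
    · rintro _ ⟨n, rfl⟩
      exact isOpen_sUnion fun u hu => (hU n).2.2.1 u (hVU n hu)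
    · intro x
      obtain ⟨k, hk⟩ := hLx x
      refine ((Set.finite_Iio k).image fun n => ⋃₀ (V n)).subset ?_
      rintro _ ⟨⟨n, rfl⟩, hn⟩
      refine ⟨n, ?_, rfl⟩
      by_contra hkn
      apply hn
      have := hV n (hLm (not_lt.1 hkn) hk)
      rwa [← Set.sUnion_eq_biUnion] at this
end

section
/- The Cantor space 2^ℕ (with the product topology) does not satisfy S1(Γ,Λ): there is a sequence (U_n)_{n∈ℕ} of γ-covers of 2^ℕ such that for every choice of U_n ∈ U_n, the family {U_n : n ∈ ℕ} is not even a cover of 2^ℕ. -/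
open Set

universe u

variable {X : Type u} [TopologicalSpace X]

/-- Points whose `n`-th row has its first `true` entry at position `m`. -/
def rowSet (n m : ℕ) : Set (ℕ → Bool) :=
  {x | x (Nat.pair n m) = true ∧ ∀ i < m, x (Nat.pair n i) = false}

theorem rowSet_unique {n m k : ℕ} {x : ℕ → Bool} (h : x ∈ rowSet n m) (h' : x ∈ rowSet n k) :
    m = k := by
  rcases lt_trichotomy m k with hl | hl | hl
  · have := h'.2 m hl
    rw [h.1] at this
    cases this
  · exact hl
  · have := h.2 k hl
    rw [h'.1] at this
    cases this

theorem rowSet_point (m : ℕ → ℕ) (n : ℕ) :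
    (fun j => decide ((Nat.unpair j).2 = m (Nat.unpair j).1)) ∈ rowSet n (m n) := by
  refine ⟨by simp, fun i hi => ?_⟩
  simp
  omega

theorem rowSet_closed (n m : ℕ) : IsClosed (rowSet n m) := by
  have h : rowSet n m = {x | x (Nat.pair n m) = true} ∩
      ⋂ i, ⋂ (_ : i < m), {x | x (Nat.pair n i) = false} := by
    ext x
    simp [rowSet]
  rw [h]
  refine IsClosed.inter (isClosed_eq (continuous_apply _) continuous_const) ?_
  exact isClosed_iInter fun i => isClosed_iInter fun _ =>
    isClosed_eq (continuous_apply _) continuous_const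

theorem rowCover_gamma (n : ℕ) : IsGammaCover (range fun m => (rowSet n m)ᶜ) := by
  refine ⟨countable_range _, infinite_range_of_injective ?_, ?_, ?_⟩
  · intro a b hab
    have hab' : rowSet n a = rowSet n b := compl_injective hab
    have h := rowSet_point (fun _ => a) n
    exact rowSet_unique h (hab' ▸ h)
  · rintro _ ⟨m, rfl⟩
    exact (rowSet_closed n m).isOpen_compl
  · intro x
    apply Set.Subsingleton.finite
    rintro _ ⟨⟨a, rfl⟩, ha⟩ _ ⟨⟨b, rfl⟩, hb⟩
    have : a = b := rowSet_unique (not_not.mp ha) (not_not.mp hb)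
    rw [this]

theorem rowCover_select (V : ℕ → Set (ℕ → Bool))
    (hV : ∀ n, V n ∈ range fun m => (rowSet n m)ᶜ) : ∃ x, ∀ n, x ∉ V n := by
  choose m hm using hV
  refine ⟨fun j => decide ((Nat.unpair j).2 = m (Nat.unpair j).1), fun n hx => ?_⟩
  rw [← hm n] at hx
  exact hx (rowSet_point m n)

theorem stmt4 :
    ¬ S1 (X := ℕ → Bool) IsGammaCover IsLargeCover ∧
      ∃ U : ℕ → Set (Set (ℕ → Bool)), (∀ n, IsGammaCover (U n)) ∧
        ∀ V : ℕ → Set (ℕ → Bool), (∀ n, V n ∈ U n) → (⋃ n, V n) ≠ univ := by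
  refine ⟨fun h => ?_, fun n => range fun m => (rowSet n m)ᶜ, rowCover_gamma, fun V hV h => ?_⟩
  · obtain ⟨V, hV, hB⟩ := h _ rowCover_gamma
    obtain ⟨x, hx⟩ := rowCover_select V hV
    obtain ⟨_, ⟨n, rfl⟩, hn⟩ := (hB.2.2 x).nonempty
    exact hx n hn
  · obtain ⟨x, hx⟩ := rowCover_select V hV
    have hxu : x ∈ ⋃ n, V n := h ▸ mem_univ x
    obtain ⟨n, hn⟩ := mem_iUnion.mp hxu
    exact hx n hn
end

section
/- If X ⊆ ℝ is an uncountable Fσ set (a countable union of sets closed in ℝ), then X with the subspace topology does not satisfy S1(Γ,Γ). -/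
open Set

universe u

variable {X : Type u} [TopologicalSpace X]

theorem stmt5 (X : Set ℝ) (hunc : ¬ X.Countable)
    (hFsigma : ∃ C : ℕ → Set ℝ, (∀ n, IsClosed (C n)) ∧ X = ⋃ n, C n) :
    ¬ S1 (X := ↥X) IsGammaCover IsGammaCover := by
  obtain ⟨C, hC, hX⟩ := hFsigma
  have h1 : ∃ n, ¬ (C n).Countable := by
    by_contra! h
    exact hunc (hX ▸ countable_iUnion h)
  obtain ⟨n0, hn0⟩ := h1
  obtain ⟨f, hfr, hfc, hfi⟩ := (hC n0).exists_nat_bool_injection_of_not_countable hn0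
  have hfX : ∀ x, f x ∈ X := fun x => by
    rw [hX]
    exact mem_iUnion.2 ⟨n0, hfr (mem_range_self x)⟩
  let F : ℕ → ℕ → Set (ℕ → Bool) := fun n k => {x | ∀ j, x (Nat.pair n j) = decide (j = k)}
  have hFcl : ∀ n k, IsClosed (F n k) := fun n k => by
    simp only [F, ofPred_forall]
    exact isClosed_iInter fun j => isClosed_eq (continuous_apply _) continuous_const
  have hFdisj : ∀ n k l x, x ∈ F n k → x ∈ F n l → k = l := by
    intro n k l x hk hl
    have := (hk k).symm.trans (hl k)
    simpa using this
  let p : (ℕ → ℕ) → (ℕ → Bool) := fun k m => decide ((Nat.unpair m).2 = k (Nat.unpair m).1)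
  have hp : ∀ k n, p k ∈ F n (k n) := by
    intro k n j
    simp [p]
  let W : ℕ → ℕ → Set X := fun n k => {y | (y : ℝ) ∉ f '' F n k}
  have hWd : ∀ n k l y, y ∉ W n k → y ∉ W n l → k = l := by
    intro n k l y hk hl
    obtain ⟨x, hx, hxy⟩ := not_not.1 hk
    obtain ⟨x', hx', hxy'⟩ := not_not.1 hl
    have : x = x' := hfi (hxy.trans hxy'.symm)
    subst this
    exact hFdisj n k l x hx hx'
  have hpW : ∀ k n, (⟨f (p k), hfX _⟩ : X) ∉ W n (k n) := fun k n h =>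
    h ⟨p k, hp k n, rfl⟩
  intro hS
  obtain ⟨V, hV, -, hinf, -, hfin⟩ := hS (fun n => range (W n)) (by
    intro n
    refine ⟨countable_range _, infinite_range_of_injective ?_, ?_, ?_⟩
    · intro k l hkl
      have h := hpW (fun _ => k) n
      exact hWd n k l _ h (hkl ▸ h)
    · rintro _ ⟨k, rfl⟩
      exact (((hFcl n k).isCompact.image hfc).isClosed.isOpen_compl).preimage
        continuous_subtype_val
    · intro y
      apply Set.Subsingleton.finite
      rintro _ ⟨⟨k, rfl⟩, hk⟩ _ ⟨⟨l, rfl⟩, hl⟩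
      rw [hWd n k l y hk hl])
  choose k hk using hV
  refine hinf ((hfin ⟨f (p k), hfX _⟩).subset ?_)
  rintro _ ⟨n, rfl⟩
  refine ⟨mem_range_self n, ?_⟩
  rw [← hk n]
  exact hpW k n
end

section
/- Give ℤ^ℕ the product topology (ℤ discrete) and pointwise addition. If L ⊆ ℤ^ℕ satisfies L + L = ℤ^ℕ (every element of ℤ^ℕ is a sum of two elements of L), then L with the subspace topology does not satisfy Ufin(Γ,Ω). -/
open Set

universe u

variable {X : Type u} [TopologicalSpace X]

theorem stmt6_bound {L : Set (ℕ → ℤ)} (n : ℕ) (V : Set (Set ↥L)) (hV : V.Finite)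
    (hs : V ⊆ range fun m : ℕ => {x : ↥L | |x.1 n| ≤ (m : ℤ)}) :
    ∃ b : ℕ, ∀ u ∈ V, ∀ x ∈ u, |x.1 n| ≤ (b : ℤ) := by
  induction V, hV using Set.Finite.induction_on with
  | empty => exact ⟨0, by simp⟩
  | @insert a s ha hfin ih =>
    obtain ⟨b, hb⟩ := ih (fun u hu => hs (Or.inr hu))
    obtain ⟨m, hm⟩ := hs (Or.inl rfl)
    refine ⟨max b m, ?_⟩
    rintro u (rfl | hu) x hx
    · rw [← hm] at hx
      have : |x.1 n| ≤ (m : ℤ) := hx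
      push_cast
      exact le_max_of_le_right this
    · push_cast
      exact le_max_of_le_left (hb u hu x hx)

theorem stmt6 (L : Set (ℕ → ℤ))
    (hL : ∀ h : ℕ → ℤ, ∃ f ∈ L, ∃ g ∈ L, f + g = h) :
    ¬ Ufin (X := ↥L) IsOmegaCover := by
  intro H
  obtain ⟨V, hV, hc⟩ := H (fun n => range fun m : ℕ => {x : ↥L | |x.1 n| ≤ (m : ℤ)}) (by
    intro n
    refine ⟨countable_range _, ?_, ?_, ?_⟩
    · intro hfin
      obtain ⟨b, hb⟩ := stmt6_bound n _ hfin subset_rfl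
      have hall : ∀ x : ↥L, |x.1 n| ≤ (b : ℤ) := fun x =>
        hb _ ⟨(x.1 n).natAbs, rfl⟩ x (by simp)
      obtain ⟨f, hf, g, hg, hfg⟩ := hL (fun _ => 2 * b + 1)
      have h1 := abs_le.1 (hall ⟨f, hf⟩)
      have h2 := abs_le.1 (hall ⟨g, hg⟩)
      have h3 := congrFun hfg n
      simp only [Pi.add_apply] at h1 h2 h3
      omega
    · rintro _ ⟨m, rfl⟩
      have hcont : Continuous fun x : ↥L => x.1 n := (continuous_apply n).comp continuous_subtype_val
      exact (isOpen_discrete {z : ℤ | |z| ≤ (m : ℤ)}).preimage hcont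
    · intro x
      refine ((Set.finite_lt_nat (x.1 n).natAbs).image
        (fun m : ℕ => {x : ↥L | |x.1 n| ≤ (m : ℤ)})).subset ?_
      rintro _ ⟨⟨m, rfl⟩, hx⟩
      refine ⟨m, ?_, rfl⟩
      simp only [Set.mem_ofPred_eq, Int.abs_eq_natAbs] at hx ⊢
      omega)
  choose b hb using fun n => stmt6_bound n (V n) (hV n).1 (hV n).2
  obtain ⟨f, hf, g, hg, hfg⟩ := hL (fun n => 2 * b n + 1)
  have key : ∃ n, (⟨f, hf⟩ : ↥L) ∈ ⋃₀ (V n) ∧ (⟨g, hg⟩ : ↥L) ∈ ⋃₀ (V n) := by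
    rcases hc with ⟨n, hn⟩ | ⟨-, -, -, h⟩
    · exact ⟨n, by simp [hn], by simp [hn]⟩
    · obtain ⟨_, ⟨n, rfl⟩, hn⟩ := h {⟨f, hf⟩, ⟨g, hg⟩} (by simp)
      exact ⟨n, hn (by simp), hn (by simp)⟩
  obtain ⟨n, ⟨u, hu, hfu⟩, ⟨v, hv, hgv⟩⟩ := key
  have h1 := abs_le.1 (hb n u hu _ hfu)
  have h2 := abs_le.1 (hb n v hv _ hgv)
  have h3 := congrFun hfg n
  simp only [Pi.add_apply] at h1 h2 h3
  omega
end

section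
/- Let X ⊆ ℝ be a set such that for every Borel measurable function Ψ from X (with its subspace topology and Borel σ-algebra) to ℕ^ℕ, the image Ψ[X] is bounded with respect to eventual domination, i.e., there exists g ∈ ℕ^ℕ such that every f ∈ Ψ[X] satisfies f(n) ≤ g(n) for all but finitely many n. Then X satisfies S1(Γ,Γ). -/
open Set

universe u

variable {X : Type u} [TopologicalSpace X]

theorem stmt7 (X : Set ℝ)
    (h : ∀ Ψ : ↥X → (ℕ → ℕ), Measurable Ψ →
      ∃ g : ℕ → ℕ, ∀ x : ↥X, ∀ᶠ n in Filter.atTop, Ψ x n ≤ g n) :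
    S1 (X := ↥X) IsGammaCover IsGammaCover := by
  classical
  intro U hU
  have hen : ∀ n, ∃ e : ℕ → Set ↥X, Function.Injective e ∧ ∀ k, e k ∈ U n := by
    intro n
    have hi := (hU n).2.1
    exact ⟨fun k => (hi.natEmbedding (U n) k : Set ↥X),
      fun a b hab => (hi.natEmbedding (U n)).injective (Subtype.ext hab),
      fun k => (hi.natEmbedding (U n) k).2⟩
  choose e hinj hmem using hen
  have hex : ∀ (n : ℕ) (x : ↥X), ∃ m, ∀ k, m ≤ k → x ∈ e n k := by
    intro n x
    have hfin : {k | x ∉ e n k}.Finite := by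
      have h1 := ((hU n).2.2.2 x).preimage (f := e n) (hinj n).injOn
      exact h1.subset fun k hk => ⟨hmem n k, hk⟩
    obtain ⟨b, hb⟩ := hfin.bddAbove
    refine ⟨b + 1, fun k hk => ?_⟩
    by_contra hx
    have := hb hx
    omega
  obtain ⟨g, hg⟩ := h (fun x n => Nat.find (hex n x)) (by
    refine measurable_pi_lambda _ fun n => ?_
    refine measurable_find (hex n) fun m => ?_
    have : {x : ↥X | ∀ k, m ≤ k → x ∈ e n k} = ⋂ k, ⋂ (_ : m ≤ k), e n k := by
      ext x; simp
    rw [this]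
    exact MeasurableSet.iInter fun k => MeasurableSet.iInter fun _ =>
      ((hU n).2.2.1 _ (hmem n k)).measurableSet)
  have hch : ∀ (n : ℕ) (s : Finset (Set ↥X)), ∃ k, g n ≤ k ∧ e n k ∉ s := by
    intro n s
    have hfin : (e n ⁻¹' (s : Set (Set ↥X))).Finite :=
      s.finite_toSet.preimage (hinj n).injOn
    obtain ⟨b, hb⟩ := hfin.bddAbove
    refine ⟨max (g n) (b + 1), le_max_left _ _, fun hx => ?_⟩
    have h1 : max (g n) (b + 1) ≤ b := hb hx
    have := le_max_right (g n) (b + 1)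
    omega
  choose c hcg hcs using hch
  let S : ℕ → Finset (Set ↥X) :=
    fun n => Nat.rec ∅ (fun n s => insert (e n (c n s)) s) n
  have hS : ∀ n, S (n + 1) = insert (e n (c n (S n))) (S n) := fun n => rfl
  have hmono : Monotone S := monotone_nat_of_le_succ fun n => by
    rw [hS]; exact Finset.subset_insert _ _
  let V : ℕ → Set ↥X := fun n => e n (c n (S n))
  have hlt : ∀ m n, m < n → V m ≠ V n := by
    intro m n hmn heq
    have h1 : V m ∈ S (m + 1) := by rw [hS]; exact Finset.mem_insert_self _ _
    have h2 : V m ∈ S n := hmono hmn h1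
    rw [heq] at h2
    exact hcs n (S n) h2
  have hV : Function.Injective V := by
    intro m n hmn
    rcases lt_trichotomy m n with hl | hl | hl
    · exact absurd hmn (hlt _ _ hl)
    · exact hl
    · exact absurd hmn.symm (hlt _ _ hl)
  refine ⟨V, fun n => hmem _ _, countable_range V, infinite_range_of_injective hV, ?_, ?_⟩
  · rintro _ ⟨n, rfl⟩
    exact (hU n).2.2.1 _ (hmem _ _)
  · intro x
    obtain ⟨N, hN⟩ := Filter.eventually_atTop.1 (hg x)
    refine ((Set.finite_Iio N).image V).subset ?_
    rintro _ ⟨⟨n, rfl⟩, hx⟩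
    refine ⟨n, ?_, rfl⟩
    by_contra hn
    have hn' : N ≤ n := not_lt.1 hn
    exact hx (Nat.find_spec (hex n x) _ ((hN n hn').trans (hcg _ _)))
end

section
/- If a topological space X does not satisfy S1(Γ,Γ), then there exists a family F ⊆ ℕ^ℕ with cardinality at most the cardinality of X that is unbounded with respect to eventual domination: there is no g ∈ ℕ^ℕ such that every f ∈ F satisfies f(n) ≤ g(n) for all but finitely many n. -/
open Set

universe u

variable {X : Type u} [TopologicalSpace X]

theorem exists_inj_selection {α : Type*} (A : ℕ → Set α) (hA : ∀ n, (A n).Infinite) :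
    ∃ V : ℕ → α, (∀ n, V n ∈ A n) ∧ Function.Injective V := by
  classical
  have hp : ∀ n (s : Finset α), ∃ u, u ∈ A n ∧ u ∉ s := fun n s => by
    obtain ⟨u, hu, hs⟩ := (hA n).exists_notMem_finset s
    exact ⟨u, hu, hs⟩
  choose pick hpA hps using hp
  let S : ℕ → Finset α := fun n => Nat.rec ∅ (fun k s => insert (pick k s) s) n
  have hS : ∀ n, S (n + 1) = insert (pick n (S n)) (S n) := fun n => rfl
  have hmono : Monotone S := monotone_nat_of_le_succ fun n => by
    rw [hS]; exact Finset.subset_insert _ _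
  refine ⟨fun n => pick n (S n), fun n => hpA _ _, ?_⟩
  have key : ∀ m n, m < n → pick m (S m) ≠ pick n (S n) := by
    intro m n hmn heq
    refine hps n (S n) ?_
    have h1 : pick m (S m) ∈ S (m + 1) := by rw [hS]; exact Finset.mem_insert_self _ _
    have h2 := hmono (Nat.succ_le_of_lt hmn) h1
    rwa [heq] at h2
  intro m n heq
  rcases lt_trichotomy m n with hlt | heq' | hlt
  · exact absurd heq (key m n hlt)
  · exact heq'
  · exact absurd heq.symm (key n m hlt)

theorem stmt13 {X : Type u} [TopologicalSpace X]
    (h : ¬ S1 (X := X) IsGammaCover IsGammaCover) :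
    ∃ F : Set (ℕ → ℕ),
      Cardinal.lift.{u} (Cardinal.mk F) ≤ Cardinal.lift.{0} (Cardinal.mk X) ∧
      ¬ ∃ g : ℕ → ℕ, ∀ f ∈ F, ∀ᶠ n in Filter.atTop, f n ≤ g n := by
  unfold S1 at h
  push Not at h
  obtain ⟨U, hU, hV⟩ := h
  have he : ∀ n, ∃ e : ℕ → Set X, Function.Injective e ∧ ∀ k, e k ∈ U n := fun n => by
    have := (hU n).2.1.to_subtype
    exact ⟨fun k => (Infinite.natEmbedding (U n) k : Set X),
      fun a b hab => (Infinite.natEmbedding (U n)).injective (Subtype.ext hab),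
      fun k => Subtype.mem _⟩
  choose e hinj hmem using he
  have hf : ∀ (x : X) (n : ℕ), ∃ m, ∀ k, m ≤ k → x ∈ e n k := fun x n => by
    have hfin : {k | x ∉ e n k}.Finite := by
      refine Set.Finite.subset (((hU n).2.2.2 x).preimage (hinj n).injOn) ?_
      intro k hk
      exact ⟨hmem n k, hk⟩
    obtain ⟨m, hm⟩ := hfin.bddAbove
    refine ⟨m + 1, fun k hk => ?_⟩
    by_contra hx
    have := hm hx
    omega
  choose f hf using hf
  refine ⟨range f, ?_, ?_⟩
  · simpa using Cardinal.mk_range_le_lift (f := f)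
  rintro ⟨g, hg⟩
  obtain ⟨V, hVA, hVinj⟩ := exists_inj_selection (fun n => e n '' Ici (g n))
    (fun n => (Set.Ici_infinite (g n)).image (hinj n).injOn)
  have hVU : ∀ n, V n ∈ U n := fun n => by
    obtain ⟨k, -, hk⟩ := hVA n
    rw [← hk]; exact hmem n k
  refine hV V hVU ⟨countable_range V, infinite_range_of_injective hVinj, ?_, fun x => ?_⟩
  · rintro _ ⟨n, rfl⟩
    exact (hU n).2.2.1 _ (hVU n)
  · obtain ⟨N, hN⟩ := Filter.eventually_atTop.1 (hg (f x) ⟨x, rfl⟩)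
    refine ((Set.finite_lt_nat N).image V).subset ?_
    rintro _ ⟨⟨n, rfl⟩, hx⟩
    refine ⟨n, ?_, rfl⟩
    by_contra hn
    apply hx
    obtain ⟨k, hk, hk'⟩ := hVA n
    rw [← hk']
    exact hf x n k ((hN n (not_lt.1 hn)).trans hk)
end

section
/- If a topological space X does not satisfy S1(Γ,Ω), then there exists a family D ⊆ ℕ^ℕ with cardinality at most max(|X|, ℵ₀) that is dominating: for every g ∈ ℕ^ℕ there is f ∈ D with g(n) ≤ f(n) for all n. -/
open Set

universe u

variable {X : Type u} [TopologicalSpace X]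

theorem stmt14 {X : Type u} [TopologicalSpace X]
    (h : ¬ S1 (X := X) IsGammaCover IsOmegaCover) :
    ∃ D : Set (ℕ → ℕ),
      Cardinal.lift.{u} (Cardinal.mk D) ≤
        max (Cardinal.lift.{0} (Cardinal.mk X)) Cardinal.aleph0 ∧
      ∀ g : ℕ → ℕ, ∃ f ∈ D, ∀ n, g n ≤ f n := by
  unfold S1 at h
  push Not at h
  obtain ⟨U, hU, hV⟩ := h
  have key : ∀ n, ∃ e : ℕ → Set X, (∀ k, e k ∈ U n ∧ e k ≠ univ) ∧
      ∀ x : X, ∃ m, ∀ k, m ≤ k → x ∈ e k := by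
    intro n
    obtain ⟨-, hinf, -, hfin⟩ := hU n
    have hinf' : (U n \ {univ}).Infinite := hinf.diff (Set.finite_singleton _)
    let e := hinf'.natEmbedding
    refine ⟨fun k => (e k : Set X), fun k => ⟨(e k).2.1, fun h => (e k).2.2 h⟩, fun x => ?_⟩
    have hf : {k : ℕ | x ∉ (e k : Set X)}.Finite := by
      refine Set.Finite.of_finite_image (f := fun k => (e k : Set X)) ((hfin x).subset ?_) ?_
      · rintro _ ⟨k, hk, rfl⟩
        exact ⟨(e k).2.1, hk⟩
      · intro a _ b _ hab
        exact e.injective (Subtype.ext hab)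
    obtain ⟨m, hm⟩ := hf.bddAbove
    refine ⟨m + 1, fun k hk => ?_⟩
    by_contra hx
    have : k ≤ m := hm hx
    omega
  choose e he m hm using key
  let f : Finset X → ℕ → ℕ := fun F n => F.sup (m n)
  refine ⟨range f, ?_, ?_⟩
  · have h1 := Cardinal.mk_range_le_lift (f := f)
    have h2 : Cardinal.mk (Finset X) ≤ max (Cardinal.mk X) Cardinal.aleph0 := by
      cases finite_or_infinite X
      · exact le_max_of_le_right (Cardinal.mk_le_aleph0 (α := Finset X))
      · rw [Cardinal.mk_finset_of_infinite]
        exact le_max_left _ _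
    simp only [Cardinal.lift_uzero, Cardinal.lift_id] at h1 ⊢
    exact h1.trans h2
  · intro g
    by_contra! hg
    refine hV (fun n => e n (g n)) (fun n => (he n _).1)
      ⟨countable_range _, ?_, ?_, ?_⟩
    · rintro _ ⟨n, rfl⟩
      exact (hU n).2.2.1 _ (he n _).1
    · rintro ⟨n, hn⟩
      exact (he n _).2 hn
    · intro F hF
      obtain ⟨n, hn⟩ := hg (f hF.toFinset) ⟨_, rfl⟩
      refine ⟨_, ⟨n, rfl⟩, fun x hx => hm n x _ ?_⟩
      exact (Finset.le_sup (f := m n) (hF.mem_toFinset.2 hx)).trans hn.le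
end

section
/- If a topological space X does not satisfy S1(Ω,Ω), then the Baire space ℕ^ℕ can be written as the union of a family of closed nowhere dense subsets of ℕ^ℕ of cardinality at most max(|X|, ℵ₀). -/
open Set

universe u

variable {X : Type u} [TopologicalSpace X]

theorem stmt15 {X : Type u} [TopologicalSpace X]
    (h : ¬ S1 (X := X) IsOmegaCover IsOmegaCover) :
    ∃ K : Set (Set (ℕ → ℕ)),
      Cardinal.lift.{u} (Cardinal.mk K) ≤
        max (Cardinal.lift.{0} (Cardinal.mk X)) Cardinal.aleph0 ∧
      (∀ k ∈ K, IsClosed k ∧ IsNowhereDense k) ∧ ⋃₀ K = univ := by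
  unfold S1 at h
  push Not at h
  obtain ⟨U, hU, hV⟩ := h
  have hne : ∀ n, (U n).Nonempty := fun n => by
    obtain ⟨u, hu, -⟩ := (hU n).2.2.2 ∅ Set.finite_empty
    exact ⟨u, hu⟩
  choose e he using fun n => (hU n).1.exists_eq_range (hne n)
  let Kf : Finset X → Set (ℕ → ℕ) := fun F => {f | ∀ n, ¬ ((F : Set X) ⊆ e n (f n))}
  have hcl : ∀ F, IsClosed (Kf F) := fun F => by
    have : Kf F = ⋂ n, (fun f : ℕ → ℕ => f n) ⁻¹' {m | ¬ ((F : Set X) ⊆ e n m)} := by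
      ext f
      simp [Kf]
    rw [this]
    exact isClosed_iInter fun n => (isClosed_discrete _).preimage (continuous_apply n)
  refine ⟨Set.range Kf, ?_, ?_, ?_⟩
  · refine le_trans Cardinal.mk_range_le_lift ?_
    rw [Cardinal.lift_uzero, Cardinal.lift_uzero]
    rcases finite_or_infinite X with hX | hX
    · exact le_max_of_le_right Cardinal.mk_le_aleph0
    · rw [Cardinal.mk_finset_of_infinite]
      exact le_max_left _ _
  · rintro _ ⟨F, rfl⟩
    refine ⟨hcl F, ?_⟩
    rw [(hcl F).isNowhereDense_iff, Set.eq_empty_iff_forall_notMem]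
    intro f hf
    have hm : ∀ n, ∃ m, (F : Set X) ⊆ e n m := fun n => by
      obtain ⟨u, hu, hFu⟩ := (hU n).2.2.2 F F.finite_toSet
      rw [he n] at hu
      obtain ⟨m, rfl⟩ := hu
      exact ⟨m, hFu⟩
    choose m hm using hm
    have ht : Filter.Tendsto (fun k => Function.update f k (m k)) Filter.atTop (nhds f) := by
      rw [tendsto_pi_nhds]
      intro i
      refine tendsto_const_nhds.congr' ?_
      filter_upwards [Filter.eventually_gt_atTop i] with k hk
      rw [Function.update_of_ne hk.ne]
    obtain ⟨k, hk⟩ := (ht.eventually (mem_interior_iff_mem_nhds.1 hf)).exists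
    exact hk k (by simpa using hm k)
  · rw [Set.eq_univ_iff_forall]
    intro f
    by_contra hf
    have hmem : ∀ n, e n (f n) ∈ U n := fun n => by
      rw [he n]
      exact ⟨_, rfl⟩
    refine hV (fun n => e n (f n)) hmem ⟨Set.countable_range _, ?_, ?_, ?_⟩
    · rintro _ ⟨n, rfl⟩
      exact (hU n).2.1 _ (hmem n)
    · rintro ⟨n, hn⟩
      have := hmem n
      simp only at hn
      rw [hn] at this
      exact (hU n).2.2.1 this
    · intro F hF
      by_contra hc
      refine hf ⟨_, ⟨hF.toFinset, rfl⟩, ?_⟩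
      intro n hn
      exact hc ⟨_, ⟨n, rfl⟩, by simpa using hn⟩
end

section
/- Identify infinite subsets of ℕ with their characteristic functions, giving the set [ℕ]^∞ of infinite subsets of ℕ the subspace topology from the Cantor space 2^ℕ. A set X ⊆ ℝ satisfies Split(Λ,Λ) with respect to clopen covers (every large cover of X consisting of sets clopen in X can be partitioned into two disjoint subfamilies each of which is a large cover of X) if and only if for every continuous f : X → [ℕ]^∞ the image f[X] is not a reaping family. -/
open Set

universe u

variable {X : Type u} [TopologicalSpace X]

theorem aux_sdr {β : Type*} (S : ℕ → Set β) (hS : ∀ n, (S n).Infinite) :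
    ∃ w : ℕ → β, Function.Injective w ∧ ∀ n, w n ∈ S n := by
  classical
  choose t ht hc using fun n => (hS n).exists_subset_card_eq (n + 1)
  have := (Finset.all_card_le_biUnion_card_iff_exists_injective t).1 (by
    intro s
    rcases s.eq_empty_or_nonempty with rfl | hne
    · simp
    · have h1 : s ⊆ Finset.range (s.max' hne + 1) := by
        intro a ha
        have := s.le_max' a ha
        simp only [Finset.mem_range]; omega
      have h2 := Finset.card_le_card h1
      have h3 := Finset.card_le_card (Finset.subset_biUnion_of_mem t (s.max'_mem hne))
      rw [hc] at h3
      simp only [Finset.card_range] at h2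
      exact h2.trans h3)
  obtain ⟨w, hw, hm⟩ := this
  exact ⟨w, hw, fun n => ht n (hm n)⟩

theorem aux_antichain {Y : Type*} [TopologicalSpace Y] (h : {A : Set Y | IsClopen A}.Infinite) :
    ∃ E : ℕ → Set Y, (∀ k, IsClopen (E k)) ∧ (∀ k, (E k).Nonempty) ∧
      ∀ i j, i ≠ j → Disjoint (E i) (E j) := by
  let Big : Set Y → Prop := fun A => IsClopen A ∧ {B : Set Y | IsClopen B ∧ B ⊆ A}.Infinite
  have step : ∀ A : {A // Big A}, ∃ B : {A // Big A}, B.1 ⊆ A.1 ∧ (A.1 \ B.1).Nonempty := by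
    rintro ⟨A, hA, hinf⟩
    obtain ⟨B, ⟨hB, hBA⟩, hne⟩ := hinf.exists_notMem_finite (Set.toFinite {∅, A})
    simp only [mem_insert_iff, mem_singleton_iff, not_or] at hne
    by_cases hb : {C : Set Y | IsClopen C ∧ C ⊆ B}.Infinite
    · refine ⟨⟨B, hB, hb⟩, hBA, ?_⟩
      rw [Set.nonempty_iff_ne_empty]
      intro h0
      exact hne.2 (hBA.antisymm (Set.diff_eq_empty.1 h0))
    · by_cases hb' : {C : Set Y | IsClopen C ∧ C ⊆ A \ B}.Infinite
      · refine ⟨⟨A \ B, hA.diff hB, hb'⟩, diff_subset, ?_⟩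
        have : A \ (A \ B) = B := by simpa using hBA
        simp only [this]
        exact Set.nonempty_iff_ne_empty.2 hne.1
      · exfalso
        rw [Set.not_infinite] at hb hb'
        apply hinf
        refine ((hb.prod hb').image (fun p => p.1 ∪ p.2)).subset ?_
        rintro C ⟨hC, hCA⟩
        refine ⟨(C ∩ B, C \ B), ⟨⟨hC.inter hB, inter_subset_right⟩,
          ⟨hC.diff hB, diff_subset_diff_left hCA⟩⟩, ?_⟩
        simp
  choose g hg1 hg2 using step
  let A0 : {A // Big A} := ⟨univ, isClopen_univ, by simpa using h⟩
  let A : ℕ → {A // Big A} := fun n => g^[n] A0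
  have hs : ∀ n, A (n + 1) = g (A n) := fun n => Function.iterate_succ_apply' g n A0
  have hanti : Antitone fun n => (A n).1 :=
    antitone_nat_of_succ_le fun n => by
      show (A (n+1)).1 ⊆ (A n).1
      rw [hs]; exact hg1 _
  have key : ∀ i j, i < j → Disjoint ((A i).1 \ (A (i+1)).1) ((A j).1 \ (A (j+1)).1) := by
    intro i j hij
    rw [Set.disjoint_left]
    rintro x ⟨_, hx⟩ ⟨hx', _⟩
    exact hx (hanti (Nat.succ_le_of_lt hij) hx')
  refine ⟨fun k => (A k).1 \ (A (k+1)).1, fun k => (A k).2.1.diff (A (k+1)).2.1, ?_, ?_⟩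
  · intro k
    show ((A k).1 \ (A (k+1)).1).Nonempty
    rw [hs]; exact hg2 _
  · intro i j hij
    rcases lt_or_gt_of_ne hij with h | h
    · exact key i j h
    · exact (key j i h).symm

/-- Splitting when the colouring has finite range. -/
theorem aux_finite {β : Type*} (U : ℕ → β) (hU : (range U).Finite) :
    ∃ s : Set ℕ, ∀ P : β → Prop, {n | P (U n)}.Infinite →
      ({n | P (U n)} \ s).Infinite ∧ ({n | P (U n)} ∩ s).Infinite := by
  classical
  refine ⟨{n | Even (Nat.count (fun m => U m = U n) n)}, ?_⟩
  intro P hP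
  have : ∃ b, P b ∧ {n | U n = b}.Infinite := by
    by_contra hcon
    push Not at hcon
    apply hP
    have hfin : (⋃ b ∈ range U ∩ {b | P b}, {n | U n = b}).Finite :=
      (hU.inter_of_left _).biUnion fun b hb => Set.not_infinite.1 (by
        simpa using hcon b hb.2)
    refine hfin.subset ?_
    intro n hn
    simp only [mem_iUnion]
    exact ⟨U n, ⟨⟨n, rfl⟩, hn⟩, rfl⟩
  obtain ⟨b, hb, hinf⟩ := this
  have hmem : ∀ k, U (Nat.nth (fun m => U m = b) k) = b := fun k =>
    Nat.nth_mem_of_infinite hinf k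
  have hcount : ∀ k, Nat.count (fun m => U m = b) (Nat.nth (fun m => U m = b) k) = k := fun k =>
    Nat.count_nth_of_infinite hinf k
  have hinj := Nat.nth_injective hinf
  constructor
  · refine Set.infinite_of_injective_forall_mem
      (f := fun k => Nat.nth (fun m => U m = b) (2 * k + 1)) ?_ ?_
    · intro i j hij
      have := hinj hij
      omega
    · intro k
      simp only [mem_diff, mem_setOf_eq, hmem, hcount]
      exact ⟨hb, by simp⟩
  · refine Set.infinite_of_injective_forall_mem
      (f := fun k => Nat.nth (fun m => U m = b) (2 * k)) ?_ ?_
    · intro i j hij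
      have := hinj hij
      omega
    · intro k
      simp only [mem_inter_iff, mem_setOf_eq, hmem, hcount]
      exact ⟨hb, by simp⟩

theorem aux_modify {Y : Type*} [TopologicalSpace Y] (h : {A : Set Y | IsClopen A}.Infinite)
    (U : ℕ → Set Y) (hU : ∀ n, IsClopen (U n)) :
    ∃ W : ℕ → Set Y, Function.Injective W ∧ (∀ n, IsClopen (W n)) ∧
      ∀ x, {n | ¬ (x ∈ W n ↔ x ∈ U n)}.Finite := by
  obtain ⟨E, hE, hne, hd⟩ := aux_antichain h
  have hEinj : Function.Injective E := by
    intro i j hij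
    by_contra hc
    have := hd i j hc
    rw [hij, disjoint_self] at this
    exact (hne j).ne_empty this
  obtain ⟨W, hW, hm⟩ := aux_sdr (fun n => range fun j => symmDiff (U n) (E (Nat.pair n j)))
    (fun n => Set.infinite_range_of_injective (by
      intro i j hij
      have := hEinj (symmDiff_right_injective _ hij)
      exact (Nat.pair_eq_pair.1 this).2))
  choose j hj using hm
  refine ⟨W, hW, ?_, ?_⟩
  · intro n
    rw [← hj n]
    exact ((hU n).diff (hE _)).union ((hE _).diff (hU n))
  · intro x
    apply Set.Subsingleton.finite
    have hx : ∀ n, ¬ (x ∈ W n ↔ x ∈ U n) → x ∈ E (Nat.pair n (j n)) := by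
      intro n hn
      by_contra hc
      apply hn
      rw [← hj n]
      simp [Set.mem_symmDiff, hc]
    intro a ha b hb
    by_contra hab
    exact Set.disjoint_left.1 (hd (Nat.pair a (j a)) (Nat.pair b (j b)) (fun h =>
      hab (Nat.pair_eq_pair.1 h).1)) (hx a ha) (hx b hb)

theorem stmt16 (X : Set ℝ) :
    (∀ U : Set (Set ↥X), U.Countable → (∀ u ∈ U, IsClopen u) →
        (∀ x : ↥X, {u ∈ U | x ∈ u}.Infinite) →
        ∃ V₀ V₁ : Set (Set ↥X), V₀ ∪ V₁ = U ∧ Disjoint V₀ V₁ ∧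
          IsLargeCover V₀ ∧ IsLargeCover V₁) ↔
      (∀ f : ↥X → {g : ℕ → Bool // {n : ℕ | g n = true}.Infinite},
        Continuous f →
          ¬ ∀ x : Set ℕ, x.Infinite → ∃ y ∈ range f,
              ({n : ℕ | (y : ℕ → Bool) n = true} \ x).Finite ∨
              ({n : ℕ | (y : ℕ → Bool) n = true} ∩ x).Finite) := by
  classical
  constructor
  · intro H f hf hreap
    -- it suffices to find a splitting set
    suffices hs : ∃ s : Set ℕ, ∀ x : X, ({n : ℕ | (f x).1 n = true} \ s).Infinite ∧
        ({n : ℕ | (f x).1 n = true} ∩ s).Infinite by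
      obtain ⟨s, hs⟩ := hs
      obtain ⟨_, ⟨x0, rfl⟩, -⟩ := hreap univ infinite_univ
      obtain ⟨_, ⟨x, rfl⟩, h⟩ := hreap s ((hs x0).2.mono inter_subset_right)
      rcases h with h | h
      · exact (hs x).1 h
      · exact (hs x).2 h
    let U : ℕ → Set X := fun n => {x | (f x).1 n = true}
    have hU : ∀ n, IsClopen (U n) := fun n =>
      (isClopen_discrete ({true} : Set Bool)).preimage
        ((continuous_apply n).comp (continuous_subtype_val.comp hf))
    by_cases hfin : {A : Set X | IsClopen A}.Infinite
    · obtain ⟨W, hW, hWc, hWU⟩ := aux_modify hfin U hU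
      have hWinf : ∀ x, {n | x ∈ W n}.Infinite := by
        intro x hx
        refine (f x).2 ((hx.union (hWU x)).subset ?_)
        intro n hn
        by_cases h : x ∈ W n
        · exact Or.inl h
        · exact Or.inr fun h' => h (h'.2 hn)
      obtain ⟨V₀, V₁, hV, hd, h0, h1⟩ := H (range W) (countable_range W)
        (by rintro _ ⟨n, rfl⟩; exact hWc n) (by
          intro x
          refine ((hWinf x).image hW.injOn).mono ?_
          rintro _ ⟨n, hn, rfl⟩
          exact ⟨⟨n, rfl⟩, hn⟩)
      have gen : ∀ V ⊆ range W, IsLargeCover V → ∀ x,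
          {n | (f x).1 n = true ∧ W n ∈ V}.Infinite := by
        intro V hVW hL x hx
        refine hL.2.2 x (((hx.union (hWU x)).image W).subset ?_)
        rintro u ⟨huV, hxu⟩
        obtain ⟨n, rfl⟩ := hVW huV
        refine ⟨n, ?_, rfl⟩
        by_cases h : (f x).1 n = true
        · exact Or.inl ⟨h, huV⟩
        · exact Or.inr fun h' => h (h'.1 hxu)
      refine ⟨{n | W n ∈ V₀}, fun x => ⟨?_, ?_⟩⟩
      · refine (gen V₁ (hV ▸ subset_union_right) h1 x).mono ?_
        rintro n ⟨hn, hn'⟩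
        exact ⟨hn, fun h => Set.disjoint_left.1 hd h hn'⟩
      · exact gen V₀ (hV ▸ subset_union_left) h0 x
    · obtain ⟨s, hs⟩ := aux_finite U ((Set.not_infinite.1 hfin).subset (by
        rintro _ ⟨n, rfl⟩; exact hU n))
      exact ⟨s, fun x => hs (fun A => x ∈ A) (f x).2⟩
  · intro H U hUc hUclopen hU
    rcases isEmpty_or_nonempty X with he | ⟨⟨x0⟩⟩
    · exact ⟨U, ∅, by simp, by simp, ⟨hUc, fun u hu => (hUclopen u hu).isOpen, fun x => he.elim x⟩,
        ⟨countable_empty, by simp, fun x => he.elim x⟩⟩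
    have hUinf : U.Infinite := (hU x0).mono (sep_subset _ _)
    have : Infinite U := hUinf.to_subtype
    have : Countable U := hUc.to_subtype
    obtain ⟨e⟩ : Nonempty (ℕ ≃ U) := by
      obtain ⟨_⟩ := nonempty_denumerable U
      exact ⟨(Denumerable.eqv U).symm⟩
    have hinf : ∀ x : X, {n | decide (x ∈ (e n).1) = true}.Infinite := by
      intro x hx
      refine hU x ((hx.image (fun n => (e n).1)).subset ?_)
      rintro u ⟨hu, hxu⟩
      refine ⟨e.symm ⟨u, hu⟩, ?_, ?_⟩ <;> simp [hxu]
    let f : X → {g : ℕ → Bool // {n : ℕ | g n = true}.Infinite} :=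
      fun x => ⟨fun n => decide (x ∈ (e n).1), hinf x⟩
    have hf : Continuous f := by
      refine Continuous.subtype_mk (continuous_pi fun n => ?_) _
      rw [continuous_discrete_rng]
      intro b
      have hc := hUclopen _ (e n).2
      cases b
      · convert hc.compl.isOpen using 1
        ext x; simp
      · convert hc.isOpen using 1
        ext x; simp
    have := H f hf
    push Not at this
    obtain ⟨s, -, hs⟩ := this
    have gen : ∀ t : Set ℕ, (∀ x, {n | x ∈ (e n).1 ∧ n ∈ t}.Infinite) →
        IsLargeCover ((fun n => (e n).1) '' t) := by
      intro t ht
      refine ⟨(to_countable t).image _, ?_, ?_⟩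
      · rintro _ ⟨n, -, rfl⟩
        exact (hUclopen _ (e n).2).isOpen
      · intro x
        refine ((ht x).image (f := fun n => (e n).1)
          (Subtype.val_injective.comp e.injective).injOn).mono ?_
        rintro _ ⟨n, ⟨hn, hnt⟩, rfl⟩
        exact ⟨⟨n, hnt, rfl⟩, hn⟩
    refine ⟨(fun n => (e n).1) '' s, (fun n => (e n).1) '' sᶜ, ?_, ?_, gen _ ?_, gen _ ?_⟩
    · rw [← image_union, union_compl_self, image_univ]
      ext u
      constructor
      · rintro ⟨n, rfl⟩; exact (e n).2
      · intro hu; exact ⟨e.symm ⟨u, hu⟩, by simp⟩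
    · exact (Set.disjoint_image_iff (Subtype.val_injective.comp e.injective)).2 disjoint_compl_right
    · intro x
      refine Set.Infinite.mono ?_ (hs (f x) ⟨x, rfl⟩).2
      rintro n ⟨hn, hns⟩
      exact ⟨by simpa [f] using hn, hns⟩
    · intro x
      refine Set.Infinite.mono ?_ (hs (f x) ⟨x, rfl⟩).1
      rintro n ⟨hn, hns⟩
      exact ⟨by simpa [f] using hn, hns⟩
end

section
/- If X ⊆ ℝ (with the subspace topology) satisfies Ufin(Γ,Γ) and no perfect subset of ℝ is contained in X, then X is perfectly meager: for every perfect set P ⊆ ℝ, the set X ∩ P is meager in the subspace topology of P. -/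
open Set

universe u

variable {X : Type u} [TopologicalSpace X]

/-- A perfect set of reals: nonempty, closed, and without isolated points. -/
def IsPerfectSet (P : Set ℝ) : Prop :=
  P.Nonempty ∧ IsClosed P ∧ ∀ x ∈ P, x ∈ closure (P \ {x})

lemma aux_closed (X : Set ℝ) (h1 : Ufin (X := ↥X) IsGammaCover)
    (D : Set ℝ) (hD : D.Countable) (hDX : ∀ d ∈ D, d ∉ X) (hDc : D ⊆ closure X) :
    ∃ F : ℕ → Set ℝ, (∀ k, IsClosed (F k)) ∧ (∀ k, ∀ d ∈ D, d ∉ F k) ∧ X ⊆ ⋃ k, F k := by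
  rcases D.eq_empty_or_nonempty with rfl | hne
  · exact ⟨fun _ => univ, fun _ => isClosed_univ, by simp, by simp [iUnion_const]⟩
  obtain ⟨d, rfl⟩ := hD.exists_eq_range hne
  let u : ℕ → ℕ → Set ↥X := fun n m => {x | ∀ i ≤ n, 1 / ((m : ℝ) + 1) < |(x : ℝ) - d i|}
  have hmono : ∀ n, Monotone (u n) := by
    intro n m m' hm x hx i hi
    exact lt_of_le_of_lt (one_div_le_one_div_of_le (by positivity) (by gcongr)) (hx i hi)
  have hopen : ∀ n m, IsOpen (u n m) := by
    intro n m
    have : u n m = ⋂ i ∈ Set.Iic n, {x : ↥X | 1 / ((m : ℝ) + 1) < |(x : ℝ) - d i|} := by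
      ext x; simp [u]
    rw [this]
    exact (Set.finite_Iic n).isOpen_biInter fun i _ => isOpen_lt (by fun_prop) (by fun_prop)
  have hcov : ∀ n (x : ↥X), ∃ m, x ∈ u n m := by
    intro n x
    have h : ∀ i, ∃ m : ℕ, x ∈ {x : ↥X | 1 / ((m : ℝ) + 1) < |(x : ℝ) - d i|} := by
      intro i
      have hpos : 0 < |(x : ℝ) - d i| := by
        rw [abs_pos, sub_ne_zero]
        intro h
        exact hDX (d i) ⟨i, rfl⟩ (h ▸ x.2)
      exact exists_nat_one_div_lt hpos
    choose m hm using h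
    refine ⟨(Finset.range (n+1)).sup m, fun i hi => ?_⟩
    have : m i ≤ (Finset.range (n+1)).sup m := Finset.le_sup (by simpa [Nat.lt_succ_iff] using hi)
    refine lt_of_le_of_lt (one_div_le_one_div_of_le (by positivity) ?_) (hm i)
    gcongr
  have hnot : ∀ n m, ∃ x, x ∉ u n m := by
    intro n m
    obtain ⟨x, hx, hd⟩ := Metric.mem_closure_iff.1 (hDc ⟨0, rfl⟩) (1 / ((m : ℝ) + 1)) (by positivity)
    refine ⟨⟨x, hx⟩, fun h => ?_⟩
    have := h 0 (Nat.zero_le _)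
    rw [dist_comm, Real.dist_eq] at hd
    exact absurd hd (not_lt.2 this.le)
  have hgam : ∀ n, IsGammaCover (range (u n)) := by
    intro n
    refine ⟨countable_range _, ?_, ?_, ?_⟩
    · intro hfin
      have : ∃ M, ∀ s ∈ range (u n), s ⊆ u n M := by
        choose! g hg using fun s (hs : s ∈ range (u n)) => hs
        obtain ⟨M, hM⟩ := (hfin.image g).bddAbove
        refine ⟨M, fun s hs => ?_⟩
        rw [← hg s hs]
        exact hmono n (hM ⟨s, hs, rfl⟩)
      obtain ⟨M, hM⟩ := this
      obtain ⟨x, hx⟩ := hnot n M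
      obtain ⟨m, hm⟩ := hcov n x
      exact hx (hM _ ⟨m, rfl⟩ hm)
    · rintro _ ⟨m, rfl⟩; exact hopen n m
    · intro x
      obtain ⟨m, hm⟩ := hcov n x
      refine ((Set.finite_Iio m).image (u n)).subset ?_
      rintro _ ⟨⟨k, rfl⟩, hk⟩
      refine ⟨k, ?_, rfl⟩
      by_contra hlt
      exact hk (hmono n (not_lt.1 hlt) hm)
  obtain ⟨V, hV, hres⟩ := h1 _ hgam
  have hb : ∀ n, ∃ M, ⋃₀ (V n) ⊆ u n M := by
    intro n
    choose! g hg using fun s (hs : s ∈ V n) => (hV n).2 hs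
    obtain ⟨M, hM⟩ := ((hV n).1.image g).bddAbove
    refine ⟨M, sUnion_subset fun s hs => ?_⟩
    rw [← hg s hs]
    exact hmono n (hM ⟨s, hs, rfl⟩)
  choose M hM using hb
  have hg : IsGammaCover (range fun n => ⋃₀ (V n)) := by
    refine hres.resolve_left ?_
    rintro ⟨n, hn⟩
    obtain ⟨x, hx⟩ := hnot n (M n)
    exact hx (hM n (hn ▸ mem_univ x))
  obtain ⟨-, hinf, -, hpt⟩ := hg
  let e := hinf.natEmbedding
  have hex : ∀ k, ∃ n, ⋃₀ (V n) = (e k : Set ↥X) := fun k => (e k).2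
  choose n hn using hex
  have hninj : Function.Injective n := by
    intro a b hab
    apply e.injective
    apply Subtype.ext
    rw [← hn a, ← hn b, hab]
  refine ⟨fun k => {x | ∀ j ≥ k, ∀ i ≤ n j, 1 / ((M (n j) : ℝ) + 1) ≤ |x - d i|}, ?_, ?_, ?_⟩
  · intro k
    simp only [setOf_forall]
    exact isClosed_iInter fun j => isClosed_iInter fun _ => isClosed_iInter fun i =>
      isClosed_iInter fun _ => isClosed_le (by fun_prop) (by fun_prop)
  · rintro k _ ⟨i, rfl⟩ h
    obtain ⟨j, hj1, hj2⟩ := ((hninj.nat_tendsto_atTop.eventually_ge_atTop i).and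
      (Filter.eventually_ge_atTop k)).exists
    have := h j hj2 i hj1
    rw [sub_self, abs_zero] at this
    have h2 : 0 < 1 / ((M (n j) : ℝ) + 1) := by positivity
    linarith
  · intro x hx
    have hfin : {k | (⟨x, hx⟩ : ↥X) ∉ (e k : Set ↥X)}.Finite := by
      refine Set.Finite.of_finite_image (f := fun k => (e k : Set ↥X))
        ((hpt ⟨x, hx⟩).subset ?_) ?_
      · rintro _ ⟨k, hk, rfl⟩
        exact ⟨(e k).2, hk⟩
      · intro a _ b _ hab
        exact e.injective (Subtype.ext hab)
    obtain ⟨K, hK⟩ := hfin.bddAbove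
    refine mem_iUnion.2 ⟨K + 1, fun j hj i hi => ?_⟩
    have hmem : (⟨x, hx⟩ : ↥X) ∈ (e j : Set ↥X) := by
      by_contra hc
      have := hK hc
      omega
    rw [← hn j] at hmem
    exact (hM _ hmem i hi).le

lemma isPerfectSet_iff (P : Set ℝ) : IsPerfectSet P ↔ P.Nonempty ∧ Perfect P := by
  unfold IsPerfectSet
  rw [perfect_def]
  simp only [Preperfect, accPt_principal_iff_clusterPt, mem_closure_iff_clusterPt]

theorem stmt17 (X : Set ℝ)
    (h1 : Ufin (X := ↥X) IsGammaCover)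
    (h2 : ∀ P : Set ℝ, IsPerfectSet P → ¬ P ⊆ X) :
    ∀ P : Set ℝ, IsPerfectSet P → IsMeagre {y : ↥P | (y : ℝ) ∈ X} := by
  intro P hP
  obtain ⟨-, hPp⟩ := (isPerfectSet_iff P).1 hP
  have hdense : ∀ O : Set ℝ, IsOpen O → (P ∩ O).Nonempty → ∃ y ∈ P \ X, y ∈ O := by
    rintro O hO ⟨x, hxP, hxO⟩
    by_contra! hcon
    obtain ⟨ε, hε, hb⟩ := Metric.nhds_basis_closedBall.mem_iff.1 (hO.mem_nhds hxO)
    refine h2 (closure (Metric.ball x ε ∩ P)) ?_ ?_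
    · rw [isPerfectSet_iff]
      exact ⟨⟨x, subset_closure ⟨Metric.mem_ball_self hε, hxP⟩⟩,
        (hPp.acc.open_inter Metric.isOpen_ball).perfect_closure⟩
    · intro y hy
      have hyP : y ∈ P := closure_minimal inter_subset_right hPp.closed hy
      have hyO : y ∈ O := hb (closure_minimal
        (inter_subset_left.trans Metric.ball_subset_closedBall) Metric.isClosed_closedBall hy)
      by_contra hyX
      exact hcon y ⟨hyP, hyX⟩ hyO
  obtain ⟨D0, hD0c, hD0d⟩ := TopologicalSpace.exists_countable_dense ↥(P \ X)
  obtain ⟨F, hFc, hFD, hFX⟩ := aux_closed X h1 (Subtype.val '' D0 ∩ closure X)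
    ((hD0c.image _).mono inter_subset_left)
    (by rintro _ ⟨⟨d, -, rfl⟩, -⟩; exact d.2.2) inter_subset_right
  have hsub : {y : ↥P | (y : ℝ) ∈ X} ⊆ ⋃ k, ((↑) : ↥P → ℝ) ⁻¹' (F k ∩ closure X) := by
    intro y hy
    obtain ⟨k, hk⟩ := mem_iUnion.1 (hFX hy)
    exact mem_iUnion.2 ⟨k, hk, subset_closure hy⟩
  refine IsMeagre.mono hsub ?_
  refine isMeagre_iUnion fun k => IsNowhereDense.isMeagre ?_
  have hcl : IsClosed (((↑) : ↥P → ℝ) ⁻¹' (F k ∩ closure X)) :=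
    ((hFc k).inter isClosed_closure).preimage continuous_subtype_val
  rw [hcl.isNowhereDense_iff, eq_empty_iff_forall_notMem]
  intro y hy
  obtain ⟨O, hO, hOe⟩ := isOpen_induced_iff.1
    (isOpen_interior (s := ((↑) : ↥P → ℝ) ⁻¹' (F k ∩ closure X)))
  have hyO : (y : ℝ) ∈ O := by rw [← hOe] at hy; exact hy
  obtain ⟨z, hz, hzO⟩ := hdense O hO ⟨y, y.2, hyO⟩
  obtain ⟨d, hdO, hd0⟩ := hD0d.exists_mem_open (hO.preimage continuous_subtype_val)
    ⟨(⟨z, hz⟩ : ↥(P \ X)), hzO⟩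
  have hmem : (⟨d, d.2.1⟩ : ↥P) ∈ interior (((↑) : ↥P → ℝ) ⁻¹' (F k ∩ closure X)) := by
    rw [← hOe]; first | exact hdO | exact hd0
  have hh := interior_subset hmem
  exact hFD k d ⟨⟨d, by first | exact hdO | exact hd0, rfl⟩, hh.2⟩ hh.1
end

section
/- For a set X ⊆ ℝ (with the subspace topology) the following are equivalent: (1) X satisfies Ufin(Γ,Γ); (2) for every Gδ subset G of ℝ with X ⊆ G there is an Fσ subset F of ℝ (a countable union of closed sets) such that X ⊆ F ⊆ G. -/
open Set

universe u

variable {X : Type u} [TopologicalSpace X]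

open Filter in
theorem hurewicz_of_ufin {Y : Type*} [TopologicalSpace Y]
    (h : Ufin (X := Y) IsGammaCover) (W : ℕ → ℕ → Set Y)
    (hopen : ∀ n k, IsOpen (W n k)) (hmono : ∀ n, Monotone (W n))
    (hanti : ∀ k, Antitone fun n => W n k) (hcov : ∀ n x, ∃ k, x ∈ W n k) :
    ∃ f : ℕ → ℕ, ∀ x, ∀ᶠ n in atTop, x ∈ W n (f n) := by
  by_cases hA : ∀ n, ∃ k, W n k = univ
  · choose f hf using hA
    exact ⟨f, fun x => Eventually.of_forall fun n => by rw [hf]; trivial⟩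
  push Not at hA
  obtain ⟨N, hN⟩ := hA
  have hN' : ∀ n k, W (N + n) k ≠ univ := by
    intro n k hk
    apply hN k
    exact univ_subset_iff.1 (hk ▸ hanti k (Nat.le_add_right N n))
  have hdom : ∀ n (V : Set (Set Y)), V.Finite → V ⊆ range (W n) → ∃ k, ⋃₀ V ⊆ W n k := by
    intro n V hV hsub
    induction V, hV using Set.Finite.induction_on with
    | empty => exact ⟨0, by simp⟩
    | @insert a s ha hs ih =>
      obtain ⟨k, hk⟩ := ih ((subset_insert _ _).trans hsub)
      obtain ⟨l, rfl⟩ := hsub (mem_insert _ _)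
      refine ⟨max k l, ?_⟩
      rw [sUnion_insert]
      exact union_subset (hmono n (le_max_right _ _)) (hk.trans (hmono n (le_max_left _ _)))
  obtain ⟨V, hV, hor⟩ := h (fun n => range (W (N + n))) (by
    intro n
    refine ⟨countable_range _, ?_, ?_, ?_⟩
    · intro hfin
      obtain ⟨k, hk⟩ := hdom _ _ hfin subset_rfl
      apply hN' n k
      apply univ_subset_iff.1
      intro x _
      obtain ⟨l, hl⟩ := hcov (N + n) x
      exact hk ⟨_, ⟨l, rfl⟩, hl⟩
    · rintro _ ⟨k, rfl⟩
      exact hopen _ _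
    · intro x
      obtain ⟨l, hl⟩ := hcov (N + n) x
      refine ((Set.finite_lt_nat l).image (W (N + n))).subset ?_
      rintro _ ⟨⟨k, rfl⟩, hk⟩
      refine ⟨k, ?_, rfl⟩
      by_contra hlk
      exact hk (hmono _ (not_lt.1 hlk) hl))
  choose g hg using fun n => hdom (N + n) (V n) (hV n).1 (hV n).2
  rcases hor with ⟨n, hn⟩ | ⟨-, hinf, -, hpt⟩
  · exact absurd (univ_subset_iff.1 (hn ▸ hg n)) (hN' n _)
  set S : ℕ → Set Y := fun n => ⋃₀ (V n) with hS
  let e : ℕ ↪ range S := hinf.natEmbedding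
  choose h0 hh0 using fun m => (e m).2
  have hinj : Function.Injective h0 := by
    intro a b hab
    apply e.injective
    apply Subtype.ext
    rw [← hh0 a, ← hh0 b, hab]
  have htend : Tendsto h0 atTop atTop := hinj.nat_tendsto_atTop
  have hex : ∀ n, ∃ m, n ≤ m ∧ n ≤ h0 m := fun n =>
    ((eventually_ge_atTop n).and (htend.eventually_ge_atTop n)).exists
  choose m' hm1 hm2 using hex
  refine ⟨fun n => g (h0 (m' n)), fun x => ?_⟩
  have hev : ∀ᶠ m in atTop, x ∈ S (h0 m) := by
    have hb : {m | x ∉ S (h0 m)}.Finite := by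
      refine Set.Finite.of_injOn (f := fun m => S (h0 m)) (t := {u ∈ range S | x ∉ u}) ?_ ?_ (hpt x)
      · intro m hm
        exact ⟨⟨_, rfl⟩, hm⟩
      · intro a _ b _ hab
        apply e.injective
        apply Subtype.ext
        rw [← hh0 a, ← hh0 b]
        exact hab
    have := hb.compl_mem_cofinite
    rw [Nat.cofinite_eq_atTop] at this
    filter_upwards [this] with m hm
    simpa using hm
  have hm' : Tendsto m' atTop atTop := tendsto_atTop_mono hm1 tendsto_id
  filter_upwards [hm'.eventually hev] with n hn
  exact hanti _ ((hm2 n).trans (Nat.le_add_left _ N)) (hg _ hn)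

open Filter in
theorem fsigma_of_ufin (X : Set ℝ) (h : Ufin (X := ↥X) IsGammaCover)
    (O : ℕ → Set ℝ) (hO : ∀ n, IsOpen (O n)) (hX : X ⊆ ⋂ n, O n) :
    ∃ F : Set ℝ, (∃ C : ℕ → Set ℝ, (∀ n, IsClosed (C n)) ∧ F = ⋃ n, C n) ∧
      X ⊆ F ∧ F ⊆ ⋂ n, O n := by
  obtain ⟨f, hf⟩ := hurewicz_of_ufin h
    (fun n k => {x : X | ∀ i ≤ n, (k : ENNReal)⁻¹ < Metric.infEDist (x : ℝ) (O i)ᶜ})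
    (by
      intro n k
      have : {x : X | ∀ i ≤ n, (k : ENNReal)⁻¹ < Metric.infEDist (x : ℝ) (O i)ᶜ}
          = ⋂ i ∈ Iic n, {x : X | (k : ENNReal)⁻¹ < Metric.infEDist (x : ℝ) (O i)ᶜ} := by
        ext x; simp
      rw [this]
      refine (finite_Iic n).isOpen_biInter fun i _ => ?_
      exact isOpen_lt continuous_const (Metric.continuous_infEDist.comp continuous_subtype_val))
    (by
      intro n k l hkl x hx i hi
      refine lt_of_le_of_lt ?_ (hx i hi)
      exact ENNReal.inv_le_inv.2 (by exact_mod_cast hkl))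
    (by
      intro k n m hnm x hx i hi
      exact hx i (hi.trans hnm))
    (by
      intro n x
      have h1 : ∀ i, ∃ k : ℕ, (k : ENNReal)⁻¹ < Metric.infEDist (x : ℝ) (O i)ᶜ := by
        intro i
        apply ENNReal.exists_inv_nat_lt
        intro h0
        have := (Metric.mem_closure_iff_infEDist_zero).2 h0
        rw [(hO i).isClosed_compl.closure_eq] at this
        exact this (mem_iInter.1 (hX x.2) i)
      choose k hk using h1
      refine ⟨(Finset.range (n + 1)).sup k, fun i hi => lt_of_le_of_lt ?_ (hk i)⟩
      apply ENNReal.inv_le_inv.2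
      exact_mod_cast Finset.le_sup (f := k) (Finset.mem_range.2 (Nat.lt_succ_of_le hi)))
  refine ⟨_, ⟨fun m => ⋂ n ≥ m, ⋂ i ≤ n,
    {x : ℝ | ((f n : ℕ) : ENNReal)⁻¹ ≤ Metric.infEDist x (O i)ᶜ}, ?_, rfl⟩, ?_, ?_⟩
  · intro m
    refine isClosed_biInter fun n _ => isClosed_biInter fun i _ => ?_
    exact isClosed_le continuous_const Metric.continuous_infEDist
  · intro x hx
    obtain ⟨m, hm⟩ := eventually_atTop.1 (hf ⟨x, hx⟩)
    simp only [mem_iUnion, mem_iInter]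
    exact ⟨m, fun n hn i hi => (hm n hn i hi).le⟩
  · intro x hx
    simp only [mem_iUnion, mem_iInter] at hx ⊢
    obtain ⟨m, hm⟩ := hx
    intro i
    by_contra hxi
    have := hm (max m i) (le_max_left _ _) i (le_max_right _ _)
    rw [mem_ofPred_eq, Metric.infEDist_zero_of_mem (show x ∈ (O i)ᶜ from hxi)] at this
    simp at this

theorem ufin_of_fsigma (X : Set ℝ)
    (h : ∀ G : Set ℝ, (∃ O : ℕ → Set ℝ, (∀ n, IsOpen (O n)) ∧ G = ⋂ n, O n) →
        X ⊆ G →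
        ∃ F : Set ℝ, (∃ C : ℕ → Set ℝ, (∀ n, IsClosed (C n)) ∧ F = ⋃ n, C n) ∧
          X ⊆ F ∧ F ⊆ G) : Ufin (X := ↥X) IsGammaCover := by
  intro U hU
  have henum : ∀ n, ∃ u : ℕ → Set X, U n = range u := fun n =>
    (hU n).1.exists_eq_range (hU n).2.1.nonempty
  choose u hu using henum
  have hext : ∀ n k, ∃ o : Set ℝ, IsOpen o ∧ (Subtype.val ⁻¹' o : Set X) = u n k := fun n k =>
    isOpen_induced_iff.1 ((hU n).2.2.1 _ (hu n ▸ mem_range_self k))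
  choose o ho hou using hext
  have hmemo : ∀ n k (x : X), (x : ℝ) ∈ o n k ↔ x ∈ u n k := by
    intro n k x
    rw [← hou]; rfl
  obtain ⟨F, ⟨C, hC, rfl⟩, hXF, hFG⟩ := h _
    ⟨fun n => ⋃ k, o n k, fun n => isOpen_iUnion (ho n), rfl⟩ (by
      intro x hx
      simp only [mem_iInter, mem_iUnion]
      intro n
      by_contra hcon
      push Not at hcon
      apply (hU n).2.1
      refine ((hU n).2.2.2 ⟨x, hx⟩).subset ?_
      intro v hv
      refine ⟨hv, ?_⟩
      rw [hu n] at hv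
      obtain ⟨k, rfl⟩ := hv
      rw [← hmemo]
      exact hcon k)
  let K : ℕ → Set ℝ := fun n => ⋃ j ∈ Iic n, (Metric.closedBall 0 (n : ℝ) ∩ C j)
  have hK : ∀ n, IsCompact (K n) := fun n =>
    (finite_Iic n).isCompact_biUnion fun j _ => (isCompact_closedBall _ _).inter_right (hC j)
  have hfin : ∀ n, ∃ t : Finset ℕ, K n ⊆ ⋃ k ∈ t, o n k := by
    intro n
    refine (hK n).elim_finite_subcover (o n) (ho n) ?_
    intro x hx
    simp only [K, mem_iUnion] at hx
    obtain ⟨j, -, -, hj⟩ := hx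
    exact mem_iInter.1 (hFG (mem_iUnion.2 ⟨j, hj⟩)) n
  choose t ht using hfin
  have hev : ∀ x : X, ∃ m, ∀ n ≥ m, x ∈ ⋃₀ (u n '' (t n : Set ℕ)) := by
    intro x
    obtain ⟨j, hj⟩ := mem_iUnion.1 (hXF x.2)
    obtain ⟨l, hl⟩ := exists_nat_ge ‖(x : ℝ)‖
    refine ⟨max j l, fun n hn => ?_⟩
    have hxK : (x : ℝ) ∈ K n := by
      simp only [K, mem_iUnion]
      refine ⟨j, (le_max_left _ _).trans hn, ?_, hj⟩
      rw [mem_closedBall_zero_iff]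
      refine hl.trans ?_
      exact_mod_cast (le_max_right _ _).trans hn
    have := ht n hxK
    simp only [mem_iUnion] at this
    obtain ⟨k, hk, hxk⟩ := this
    exact ⟨u n k, ⟨k, hk, rfl⟩, (hmemo n k x).1 hxk⟩
  refine ⟨fun n => u n '' (t n : Set ℕ), fun n => ⟨(t n).finite_toSet.image _, ?_⟩, ?_⟩
  · rw [hu n]
    exact image_subset_range _ _
  by_cases hfull : ∃ n, ⋃₀ (u n '' (t n : Set ℕ)) = univ
  · exact Or.inl hfull
  refine Or.inr ⟨countable_range _, ?_, ?_, ?_⟩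
  · intro hfinr
    apply hfull
    haveI : Finite (range fun n => ⋃₀ (u n '' (t n : Set ℕ))) := hfinr
    obtain ⟨⟨y, n0, hn0⟩, hy⟩ := Finite.exists_infinite_fiber
      (rangeFactorization fun n => ⋃₀ (u n '' (t n : Set ℕ)))
    refine ⟨n0, univ_subset_iff.1 fun x _ => ?_⟩
    obtain ⟨m, hm⟩ := hev x
    obtain ⟨n, hn, hmn⟩ := (Set.infinite_coe_iff.1 hy).exists_gt m
    have h1 : ⋃₀ (u n '' (t n : Set ℕ)) = y := congrArg Subtype.val hn
    have h2 := hm n hmn.le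
    rw [h1, ← hn0] at h2
    exact h2
  · rintro _ ⟨n, rfl⟩
    refine isOpen_sUnion ?_
    rintro _ ⟨k, -, rfl⟩
    exact (hU n).2.2.1 _ (hu n ▸ mem_range_self k)
  · intro x
    obtain ⟨m, hm⟩ := hev x
    refine ((Set.finite_lt_nat m).image fun n => ⋃₀ (u n '' (t n : Set ℕ))).subset ?_
    rintro _ ⟨⟨n, rfl⟩, hn⟩
    refine ⟨n, ?_, rfl⟩
    by_contra hlt
    exact hn (hm n (not_lt.1 hlt))

theorem stmt18 (X : Set ℝ) :
    Ufin (X := ↥X) IsGammaCover ↔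
      ∀ G : Set ℝ, (∃ O : ℕ → Set ℝ, (∀ n, IsOpen (O n)) ∧ G = ⋂ n, O n) →
        X ⊆ G →
        ∃ F : Set ℝ, (∃ C : ℕ → Set ℝ, (∀ n, IsClosed (C n)) ∧ F = ⋃ n, C n) ∧
          X ⊆ F ∧ F ⊆ G := by
  constructor
  · rintro h _ ⟨O, hO, rfl⟩ hX
    exact fsigma_of_ufin X h O hO hX
  · exact ufin_of_fsigma X
end

section
/- Every topological space X satisfying S1(Ω,Ω) satisfies Q(Ω,Ω): for every ω-cover U of X and every partition of U into countably many pairwise disjoint nonempty finite sets (F_n)_{n∈ℕ}, there is a subfamily V ⊆ U that is an ω-cover of X and satisfies |V ∩ F_n| ≤ 1 for every n. -/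
open Set

universe u

variable {X : Type u} [TopologicalSpace X]

theorem stmt19 {X : Type u} [TopologicalSpace X]
    (h : S1 (X := X) IsOmegaCover IsOmegaCover) :
    ∀ U : Set (Set X), IsOmegaCover U →
      ∀ F : ℕ → Set (Set X), (∀ n, (F n).Finite ∧ (F n).Nonempty) →
        (Pairwise fun m n => Disjoint (F m) (F n)) → (⋃ n, F n) = U →
        ∃ V ⊆ U, IsOmegaCover V ∧ ∀ n, (V ∩ F n).Subsingleton := by
  intro U hU F hF hdisj hFU
  obtain ⟨hUc, hUo, hUu, hUf⟩ := hU
  have hmem : ∀ {k u}, u ∈ F k → u ∈ U := fun {k u} hu => hFU ▸ mem_iUnion.2 ⟨k, hu⟩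
  -- infinitely many members of `U` contain a given finite set
  have hinf : ∀ G : Set X, G.Finite → {u ∈ U | G ⊆ u}.Infinite := by
    intro G hG hfin
    have hx : ∀ u : Set X, ∃ x : Set X, x.Finite ∧ (u ∈ U → ¬ x ⊆ u) := by
      intro u
      by_cases hu : u ∈ U
      · have hne : u ≠ univ := fun e => hUu (e ▸ hu)
        obtain ⟨x, hx⟩ := (ne_univ_iff_exists_notMem u).1 hne
        exact ⟨{x}, finite_singleton x, fun _ hs => hx (hs rfl)⟩
      · exact ⟨∅, finite_empty, fun h => absurd h hu⟩
    choose x hxf hx using hx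
    obtain ⟨u, hu, hGu⟩ := hUf (G ∪ ⋃ u ∈ {u ∈ U | G ⊆ u}, x u)
      (hG.union (hfin.biUnion fun u _ => hxf u))
    have hu' : u ∈ {u ∈ U | G ⊆ u} := ⟨hu, subset_union_left.trans hGu⟩
    exact hx u hu ((subset_biUnion_of_mem (u := x) hu').trans (subset_union_right.trans hGu))
  -- infinitely many blocks contain a member containing a given finite set
  have hblk : ∀ G : Set X, G.Finite → {k | ∃ u ∈ F k, G ⊆ u}.Infinite := by
    intro G hG hfin
    refine hinf G hG ((hfin.biUnion fun k _ => (hF k).1).subset ?_)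
    rintro u ⟨hu, hGu⟩
    obtain ⟨k, hk⟩ := mem_iUnion.1 (hFU.symm ▸ hu)
    exact mem_biUnion (show k ∈ {k | ∃ u ∈ F k, G ⊆ u} from ⟨u, hk, hGu⟩) hk
  obtain ⟨V, hV, hVω⟩ := h
    (fun n => {w | ∃ (K : Finset ℕ) (c : ℕ → Set X), K.card = n + 1 ∧
      (∀ k ∈ K, c k ∈ F k) ∧ w = ⋂ k ∈ K, c k}) (by
    intro n
    refine ⟨?_, ?_, ?_, ?_⟩
    · refine ((countable_setOf_finite_subset hUc).image sInter).mono ?_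
      rintro w ⟨K, c, -, hc, rfl⟩
      refine ⟨c '' K, ⟨K.finite_toSet.image c, ?_⟩, by simp [sInter_image]⟩
      rintro _ ⟨k, hk, rfl⟩
      exact hmem (hc k hk)
    · rintro w ⟨K, c, -, hc, rfl⟩
      exact isOpen_biInter_finset fun k hk => hUo _ (hmem (hc k hk))
    · rintro ⟨K, c, hK, hc, e⟩
      obtain ⟨k, hk⟩ : K.Nonempty := Finset.card_pos.1 (by omega)
      have : c k = univ := by
        apply univ_subset_iff.1
        rw [e]
        exact biInter_subset_of_mem hk
      exact hUu (this ▸ hmem (hc k hk))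
    · intro G hG
      obtain ⟨K, hKs, hK⟩ := (hblk G hG).exists_subset_card_eq (n + 1)
      have hc : ∀ k, ∃ u, k ∈ K → u ∈ F k ∧ G ⊆ u := by
        intro k
        by_cases hk : k ∈ K
        · obtain ⟨u, hu⟩ := hKs hk
          exact ⟨u, fun _ => hu⟩
        · exact ⟨∅, fun h => absurd h hk⟩
      choose c hc using hc
      exact ⟨_, ⟨K, c, hK, fun k hk => (hc k hk).1, rfl⟩,
        subset_iInter₂ fun k hk => (hc k hk).2⟩)
  choose K c hK hc hVe using hV
  obtain ⟨g, hgi, hg⟩ := (Finset.all_card_le_biUnion_card_iff_exists_injective K).1 (by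
    intro s
    rcases s.eq_empty_or_nonempty with rfl | hs
    · simp
    · have h1 : s.card ≤ s.max' hs + 1 := by
        rw [← Finset.card_range (s.max' hs + 1)]
        refine Finset.card_le_card fun i hi => ?_
        have := s.le_max' i hi
        exact Finset.mem_range.2 (by omega)
      rw [← hK (s.max' hs)] at h1
      exact h1.trans (Finset.card_le_card (Finset.subset_biUnion_of_mem K (s.max'_mem hs))))
  have hsub : range (fun n => c n (g n)) ⊆ U := by
    rintro _ ⟨n, rfl⟩
    exact hmem (hc n _ (hg n))
  refine ⟨range (fun n => c n (g n)), hsub,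
    ⟨countable_range _, fun u hu => hUo u (hsub hu), fun hu => hUu (hsub hu), ?_⟩, ?_⟩
  · intro G hG
    obtain ⟨_, ⟨n, rfl⟩, hGV⟩ := hVω.2.2.2 G hG
    refine ⟨_, ⟨n, rfl⟩, hGV.trans ?_⟩
    rw [hVe n]
    exact biInter_subset_of_mem (hg n)
  · have key : ∀ m n, c n (g n) ∈ F m → g n = m := by
      intro m n hm
      by_contra hne
      exact disjoint_left.1 (hdisj hne) (hc n _ (hg n)) hm
    rintro m _ ⟨⟨a, rfl⟩, ha⟩ _ ⟨⟨b, rfl⟩, hb⟩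
    have : a = b := hgi ((key m a ha).trans (key m b hb).symm)
    rw [this]
end
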